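/- arXiv:2512.21793 — 2 statements merged into one kernel-verified Lean document; each statement's English description precedes it below -/
import Mathlib

section
/- Consider the relaxed regulator's problem in which the budget constraint is weakened to the inequality ∫₀^ū ∫₀^ᾱ f(α) g(u) r(u) a(α,u) dα du ≥ K·∫₀^ū ∫₀^ᾱ f(α) g(u) c(α,u) dα du, all other constraints and the objective being unchanged. If K ≥ K_low, then the budget constraint holds with equality at an optimal solution of the relaxed problem. -/
open MeasureTheory Set

noncomputable section

namespace Spectrum

/-- The CDF associated with a density via `F x = ∫ s in 0..x, f s`. -/
def CDF (f : ℝ → ℝ) (x : ℝ) : ℝ := ∫ s in (0:ℝ)..x, f s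

/-- `r u = (1 - G u) / g u - u`. -/
def rFun (g : ℝ → ℝ) (u : ℝ) : ℝ := (1 - CDF g u) / g u - u

/-- The lower threshold `K_low` on the cost of inspection. -/
def Klow (f g : ℝ → ℝ) (αstar : ℝ → ℝ) (v : ℝ) : ℝ :=
  (∫ u in (0:ℝ)..v, (1 - CDF f (αstar u)) * (1 - CDF g u - u * g u)) /
  (∫ u in (0:ℝ)..v, (1 - CDF f (αstar u)) * g u)

/-- `f` is a continuous, strictly positive probability density on `[0, b]`. -/
structure IsDensityOn (f : ℝ → ℝ) (b : ℝ) : Prop where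
  cont : ContinuousOn f (Icc 0 b)
  pos : ∀ x ∈ Icc (0:ℝ) b, 0 < f x
  supp : ∀ x, x ∉ Icc (0:ℝ) b → f x = 0
  int_one : (∫ x in (0:ℝ)..b, f x) = 1

/-- The regulator's objective. -/
def J (abar ubar v : ℝ) (f g : ℝ → ℝ) (t : ℝ → ℝ → ℝ) (a : ℝ → ℝ → ℝ) : ℝ :=
  ∫ u in (0:ℝ)..ubar, ∫ α in (0:ℝ)..abar, f α * g u * (min v (t α u) - u) * a α u

/-- Feasibility of an allocation/inspection pair for the regulator's problem. -/
structure Feasible (abar ubar K : ℝ) (f g : ℝ → ℝ) (a c : ℝ → ℝ → ℝ) : Prop where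
  meas_a : Measurable (Function.uncurry a)
  meas_c : Measurable (Function.uncurry c)
  mem_a : ∀ α u, a α u ∈ Icc (0:ℝ) 1
  mem_c : ∀ α u, c α u ∈ Icc (0:ℝ) 1
  budget : (∫ u in (0:ℝ)..ubar, ∫ α in (0:ℝ)..abar, f α * g u * rFun g u * a α u)
      = K * ∫ u in (0:ℝ)..ubar, ∫ α in (0:ℝ)..abar, f α * g u * c α u
  ic : ∀ α u, a α u * (1 - c α u) ≤ a 0 u
  inspect : ∀ α u, c α u ≤ a α u
  u_mono : ∀ α u u', u' ≤ u → a α u ≤ a α u'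
  α_mono0 : ∀ α u, a 0 u ≤ a α u

/-- Optimality for the regulator's problem. -/
def Optimal (abar ubar v K : ℝ) (f g : ℝ → ℝ) (t : ℝ → ℝ → ℝ) (a c : ℝ → ℝ → ℝ) : Prop :=
  Feasible abar ubar K f g a c ∧
  ∀ a' c' : ℝ → ℝ → ℝ, Feasible abar ubar K f g a' c' →
    J abar ubar v f g t a' ≤ J abar ubar v f g t a

/-- The interference is `t(α,u) = α` (independent case, with `α*(u) = u`)
or `t(α,u) = α·u` (power case, with `α*(u) = 1`). -/
def InterferenceSpec (t : ℝ → ℝ → ℝ) (αstar : ℝ → ℝ) : Prop :=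
  ((∀ α u, t α u = α) ∧ (∀ u, αstar u = u)) ∨
  ((∀ α u, t α u = α * u) ∧ (∀ u, αstar u = 1))

/-- Feasibility for the relaxed problem where the budget constraint is an inequality. -/
structure FeasibleRelaxed (abar ubar K : ℝ) (f g : ℝ → ℝ) (a c : ℝ → ℝ → ℝ) : Prop where
  meas_a : Measurable (Function.uncurry a)
  meas_c : Measurable (Function.uncurry c)
  mem_a : ∀ α u, a α u ∈ Icc (0:ℝ) 1
  mem_c : ∀ α u, c α u ∈ Icc (0:ℝ) 1
  budget : (∫ u in (0:ℝ)..ubar, ∫ α in (0:ℝ)..abar, f α * g u * rFun g u * a α u)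
      ≥ K * ∫ u in (0:ℝ)..ubar, ∫ α in (0:ℝ)..abar, f α * g u * c α u
  ic : ∀ α u, a α u * (1 - c α u) ≤ a 0 u
  inspect : ∀ α u, c α u ≤ a α u
  u_mono : ∀ α u u', u' ≤ u → a α u ≤ a α u'
  α_mono0 : ∀ α u, a 0 u ≤ a α u

/-- Optimality for the relaxed problem. -/
def OptimalRelaxed (abar ubar v K : ℝ) (f g : ℝ → ℝ) (t : ℝ → ℝ → ℝ)
    (a c : ℝ → ℝ → ℝ) : Prop :=
  FeasibleRelaxed abar ubar K f g a c ∧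
  ∀ a' c' : ℝ → ℝ → ℝ, FeasibleRelaxed abar ubar K f g a' c' →
    J abar ubar v f g t a' ≤ J abar ubar v f g t a

/-- The base measure on pairs `(u, α)`. -/
def mu (abar ubar : ℝ) : Measure (ℝ × ℝ) :=
  (volume.restrict (Ioc 0 ubar)).prod (volume.restrict (Ioc 0 abar))

/-- The first-best region. -/
def Reg (αstar : ℝ → ℝ) (v : ℝ) : Set (ℝ × ℝ) := {p | 0 < p.2 ∧ αstar p.1 < p.2 ∧ p.1 < v}

lemma mu_eq (abar ubar : ℝ) :
    mu abar ubar = volume.restrict (Ioc 0 ubar ×ˢ Ioc 0 abar) := by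
  rw [mu, Measure.prod_restrict]; rfl

instance (abar ubar : ℝ) : IsFiniteMeasure (mu abar ubar) := by
  unfold mu; infer_instance

lemma ae_mem (abar ubar : ℝ) :
    ∀ᵐ p ∂(mu abar ubar), p ∈ Ioc 0 ubar ×ˢ Ioc 0 abar := by
  rw [mu_eq]
  exact ae_restrict_mem (measurableSet_Ioc.prod measurableSet_Ioc)

lemma iter_eq {abar ubar : ℝ} (habar : 0 < abar) (hubar : 0 < ubar) (W : ℝ × ℝ → ℝ)
    (hW : Integrable W (mu abar ubar)) :
    (∫ u in (0:ℝ)..ubar, ∫ α in (0:ℝ)..abar, W (u, α)) = ∫ p, W p ∂(mu abar ubar) := by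
  rw [intervalIntegral.integral_of_le hubar.le, mu, integral_prod _ hW]
  simp_rw [intervalIntegral.integral_of_le habar.le]

lemma integrable_of_contOn {abar ubar : ℝ} (W : ℝ × ℝ → ℝ)
    (hW : ContinuousOn W (Icc 0 ubar ×ˢ Icc 0 abar)) : Integrable W (mu abar ubar) := by
  rw [mu_eq]
  exact (hW.integrableOn_compact (isCompact_Icc.prod isCompact_Icc)).mono_set
    (prod_mono Ioc_subset_Icc_self Ioc_subset_Icc_self)

lemma integrable_mul01 {μ : Measure (ℝ × ℝ)} {W b : ℝ × ℝ → ℝ} (hW : Integrable W μ)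
    (hb : Measurable b) (h0 : ∀ p, b p ∈ Icc (0:ℝ) 1) : Integrable (fun p => W p * b p) μ := by
  refine hW.mul_bdd (c := 1) hb.aestronglyMeasurable (Filter.Eventually.of_forall fun p => ?_)
  rw [Real.norm_eq_abs, abs_of_nonneg (h0 p).1]; exact (h0 p).2

lemma meas_flip {a : ℝ → ℝ → ℝ} (h : Measurable (Function.uncurry a)) :
    Measurable (fun p : ℝ × ℝ => a p.2 p.1) :=
  h.comp measurable_swap

lemma meas_flip' {a : ℝ → ℝ → ℝ} (h : Measurable (fun p : ℝ × ℝ => a p.2 p.1)) :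
    Measurable (Function.uncurry a) :=
  h.comp measurable_swap

lemma dens_int {f : ℝ → ℝ} {b : ℝ} (hf : IsDensityOn f b) : Integrable f volume := by
  have h : IntegrableOn f (Icc 0 b) := hf.cont.integrableOn_compact isCompact_Icc
  have : f = (Icc 0 b).indicator f := by
    ext x
    by_cases hx : x ∈ Icc 0 b
    · simp [hx]
    · rw [indicator_of_notMem hx, hf.supp x hx]
  rw [this]
  exact h.integrable_indicator measurableSet_Icc

lemma cdf_cont {f : ℝ → ℝ} {b : ℝ} (hf : IsDensityOn f b) : Continuous (CDF f) :=
  intervalIntegral.continuous_primitive (fun _ _ => (dens_int hf).intervalIntegrable) 0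

lemma r_cont {g : ℝ → ℝ} {b : ℝ} (hg : IsDensityOn g b) : ContinuousOn (rFun g) (Icc 0 b) := by
  unfold rFun
  exact ((continuousOn_const.sub (cdf_cont hg).continuousOn).div hg.cont
    (fun x hx => (hg.pos x hx).ne')).sub continuousOn_id

lemma meas_Reg {αstar : ℝ → ℝ} (h : Measurable αstar) (v : ℝ) : MeasurableSet (Reg αstar v) := by
  unfold Reg
  exact (measurableSet_lt measurable_const measurable_snd).inter
    ((measurableSet_lt (h.comp measurable_fst) measurable_snd).inter
      (measurableSet_lt measurable_fst measurable_const))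

/-- trimming an integral -/
lemma trim_int {φ : ℝ → ℝ} {b v : ℝ} (hφ : ∀ u, b < u → φ u = 0) :
    (∫ u in Ioc 0 b, (Iio v).indicator φ u) = ∫ u in Ioc 0 v, φ u := by
  rw [← integral_indicator measurableSet_Ioc, ← integral_indicator measurableSet_Ioc]
  apply integral_congr_ae
  have : ∀ᵐ u : ℝ, u ≠ v := by simp [ae_iff]
  filter_upwards [this] with u hu
  by_cases h1 : 0 < u <;> by_cases h2 : u ≤ b <;> by_cases h3 : u < v
  all_goals
    have h4 : u ≤ v ↔ u < v := ⟨fun h => lt_of_le_of_ne h hu, le_of_lt⟩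
    simp [indicator, h1, h2, h3, h4]
  all_goals exact (hφ u (not_le.1 h2)).symm

lemma cdf_tail {f : ℝ → ℝ} {b s : ℝ} (hf : IsDensityOn f b) (hb : 0 < b) (hs : 0 ≤ s) :
    (∫ α in Ioc 0 b, (Ioi s).indicator f α) = 1 - CDF f s := by
  have h1 : (∫ α in Ioc 0 b, f α) = 1 := by
    rw [← hf.int_one, intervalIntegral.integral_of_le hb.le]
  have h2 : (∫ α in Ioc 0 b, (Iio s).indicator f α) = CDF f s := by
    rw [CDF, intervalIntegral.integral_of_le hs]
    exact trim_int fun u hu => hf.supp u fun h => absurd h.2 (not_le.2 hu)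
  rw [← h1, ← h2, ← integral_sub (dens_int hf).integrableOn
    ((dens_int hf).integrableOn.indicator measurableSet_Iio)]
  apply integral_congr_ae
  have : ∀ᵐ u ∂(volume.restrict (Ioc 0 b)), u ≠ s := by
    apply ae_restrict_of_ae; simp [ae_iff]
  filter_upwards [this] with u hu
  rcases lt_or_gt_of_ne hu with h | h
  · simp [indicator, h, h.le, not_lt.2 h.le]
  · simp [indicator, h, h.le, not_lt.2 h.le]

lemma cdf_top {g : ℝ → ℝ} {b u : ℝ} (hg : IsDensityOn g b) (hb : 0 < b) (hu : b < u) :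
    CDF g u = 1 := by
  have := cdf_tail hg hb (hb.trans hu).le
  rw [setIntegral_congr_fun (g := fun _ => 0) measurableSet_Ioc] at this
  · simp at this; linarith
  · intro x hx
    simp [indicator, not_lt.2 (hx.2.trans hu.le)]

/-- Integrating a weight `f α * ψ u` over the first-best region. -/
lemma reg_int {abar ubar v : ℝ} (habar : 0 < abar) (hv : 0 < v)
    {f ψ φ : ℝ → ℝ} {αstar : ℝ → ℝ} (hf : IsDensityOn f abar)
    (hm : Measurable αstar) (hpos : ∀ u, 0 < u → 0 < αstar u)
    (hφ : ∀ u ∈ Ioc 0 ubar, ψ u = φ u) (hφ0 : ∀ u, ubar < u → φ u = 0)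
    (hint : Integrable (fun p : ℝ × ℝ => f p.2 * ψ p.1) (mu abar ubar)) :
    (∫ p, (f p.2 * ψ p.1) * (Reg αstar v).indicator 1 p ∂(mu abar ubar))
      = ∫ u in (0:ℝ)..v, (1 - CDF f (αstar u)) * φ u := by
  have hint' : Integrable (fun p : ℝ × ℝ => (f p.2 * ψ p.1) * (Reg αstar v).indicator 1 p)
      (mu abar ubar) := by
    apply integrable_mul01 hint
    · exact measurable_one.indicator (meas_Reg hm v)
    · intro p; by_cases h : p ∈ Reg αstar v <;> simp [h]
  rw [intervalIntegral.integral_of_le hv.le, ← trim_int (b := ubar), mu, integral_prod _ hint']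
  · apply setIntegral_congr_fun measurableSet_Ioc
    intro u hu
    by_cases huv : u < v
    · have : (u ∈ Iio v) := huv
      simp only [indicator_of_mem this]
      rw [← cdf_tail hf habar (hpos u hu.1).le, ← hφ u hu, ← integral_mul_const]
      apply setIntegral_congr_fun measurableSet_Ioc
      intro α hα
      by_cases h : αstar u < α
      · simp [indicator, Reg, h, huv, hα.1]
      · simp [indicator, Reg, h]
    · have : (u ∉ Iio v) := huv
      simp only [indicator_of_notMem this]
      simp [indicator, Reg, huv]
  · intro u hu
    rw [hφ0 u hu, mul_zero]

/-- nullity of the slices -/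
lemma null_graph {abar ubar : ℝ} {αstar : ℝ → ℝ} (hm : Measurable αstar) (v : ℝ) :
    ∀ᵐ p ∂(mu abar ubar), p.2 ≠ αstar p.1 ∧ p.1 ≠ v := by
  have hms : MeasurableSet {p : ℝ × ℝ | p.2 ≠ αstar p.1 ∧ p.1 ≠ v} :=
    ((measurableSet_eq_fun measurable_snd (hm.comp measurable_fst)).compl).inter
      ((measurableSet_eq_fun measurable_fst measurable_const).compl)
  rw [mu, Measure.ae_prod_iff_ae_ae hms]
  have : ∀ᵐ u ∂(volume.restrict (Ioc 0 ubar)), u ≠ v := by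
    apply ae_restrict_of_ae; simp [ae_iff]
  filter_upwards [this] with u hu
  have : ∀ᵐ α ∂(volume.restrict (Ioc 0 abar)), α ≠ αstar u := by
    apply ae_restrict_of_ae; simp [ae_iff]
  filter_upwards [this] with α hα
  exact ⟨hα, hu⟩

lemma weight_sign {abar ubar v : ℝ} {f g : ℝ → ℝ} {t : ℝ → ℝ → ℝ} {αstar : ℝ → ℝ}
    (hf : IsDensityOn f abar) (hg : IsDensityOn g ubar)
    (ht : InterferenceSpec t αstar) (hm : Measurable αstar) :
    ∀ᵐ p ∂(mu abar ubar),
      (p ∈ Reg αstar v → 0 < f p.2 * g p.1 * (min v (t p.2 p.1) - p.1)) ∧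
      (p ∉ Reg αstar v → f p.2 * g p.1 * (min v (t p.2 p.1) - p.1) < 0) := by
  filter_upwards [ae_mem abar ubar, null_graph hm v] with p hp hn
  obtain ⟨⟨hu0, hu1⟩, hα0, hα1⟩ := hp
  obtain ⟨hn1, hn2⟩ := hn
  have hfg : 0 < f p.2 * g p.1 :=
    mul_pos (hf.pos _ ⟨hα0.le, hα1⟩) (hg.pos _ ⟨hu0.le, hu1⟩)
  have key : αstar p.1 < p.2 → p.1 < t p.2 p.1 := by
    rcases ht with ⟨h1, h2⟩ | ⟨h1, h2⟩
    · rw [h1, h2]; exact id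
    · rw [h1, h2]; intro h; nlinarith
  have key2 : p.2 < αstar p.1 → t p.2 p.1 < p.1 := by
    rcases ht with ⟨h1, h2⟩ | ⟨h1, h2⟩
    · rw [h1, h2]; exact id
    · rw [h1, h2]; intro h; nlinarith
  constructor
  · rintro ⟨-, h1, h2⟩
    exact mul_pos hfg (sub_pos.2 (lt_min h2 (key h1)))
  · intro h
    refine mul_neg_of_pos_of_neg hfg (sub_neg.2 ?_)
    rw [min_lt_iff]
    by_contra hcon
    push Not at hcon
    apply h
    refine ⟨hα0, ?_, lt_of_le_of_ne hcon.1 hn2⟩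
    rcases lt_or_gt_of_ne hn1 with h' | h'
    · exact absurd (key2 h') (not_lt.2 hcon.2)
    · exact h'

/-- budget surplus as one integral over the product -/
def Bud (abar ubar K : ℝ) (f g : ℝ → ℝ) (a c : ℝ → ℝ → ℝ) : ℝ :=
  ∫ p : ℝ × ℝ, (f p.2 * g p.1 * rFun g p.1 * a p.2 p.1 - K * (f p.2 * g p.1 * c p.2 p.1))
    ∂(mu abar ubar)

section core

variable {abar ubar v K : ℝ} {f g : ℝ → ℝ} {t : ℝ → ℝ → ℝ} {αstar : ℝ → ℝ} {a c : ℝ → ℝ → ℝ}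

lemma fst_maps : MapsTo (Prod.fst : ℝ × ℝ → ℝ) (Icc 0 ubar ×ˢ Icc 0 abar) (Icc 0 ubar) :=
  fun _ hp => hp.1

lemma snd_maps : MapsTo (Prod.snd : ℝ × ℝ → ℝ) (Icc 0 ubar ×ˢ Icc 0 abar) (Icc 0 abar) :=
  fun _ hp => hp.2

lemma int_w2 (hf : IsDensityOn f abar) (hg : IsDensityOn g ubar) :
    Integrable (fun p : ℝ × ℝ => f p.2 * g p.1) (mu abar ubar) :=
  integrable_of_contOn _ ((hf.cont.comp continuousOn_snd snd_maps).mul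
    (hg.cont.comp continuousOn_fst fst_maps))

lemma int_w1 (hf : IsDensityOn f abar) (hg : IsDensityOn g ubar) :
    Integrable (fun p : ℝ × ℝ => f p.2 * g p.1 * rFun g p.1) (mu abar ubar) :=
  integrable_of_contOn _ (((hf.cont.comp continuousOn_snd snd_maps).mul
    (hg.cont.comp continuousOn_fst fst_maps)).mul ((r_cont hg).comp continuousOn_fst fst_maps))

lemma int_w3 (hf : IsDensityOn f abar) (hg : IsDensityOn g ubar)
    (ht : InterferenceSpec t αstar) :
    Integrable (fun p : ℝ × ℝ => f p.2 * g p.1 * (min v (t p.2 p.1) - p.1)) (mu abar ubar) := by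
  refine integrable_of_contOn _ (((hf.cont.comp continuousOn_snd snd_maps).mul
    (hg.cont.comp continuousOn_fst fst_maps)).mul (Continuous.continuousOn ?_))
  rcases ht with ⟨h, -⟩ | ⟨h, -⟩
  · simp only [h]; fun_prop
  · simp only [h]; fun_prop

lemma int_bud (hf : IsDensityOn f abar) (hg : IsDensityOn g ubar)
    (ma : Measurable (Function.uncurry a)) (mc : Measurable (Function.uncurry c))
    (ha : ∀ α u, a α u ∈ Icc (0:ℝ) 1) (hc : ∀ α u, c α u ∈ Icc (0:ℝ) 1) :
    Integrable (fun p : ℝ × ℝ => f p.2 * g p.1 * rFun g p.1 * a p.2 p.1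
      - K * (f p.2 * g p.1 * c p.2 p.1)) (mu abar ubar) :=
  (integrable_mul01 (int_w1 hf hg) (meas_flip ma) (fun p => ha _ _)).sub
    ((integrable_mul01 (int_w2 hf hg) (meas_flip mc) (fun p => hc _ _)).const_mul K)

lemma bud_eq (habar : 0 < abar) (hubar : 0 < ubar)
    (hf : IsDensityOn f abar) (hg : IsDensityOn g ubar)
    (ma : Measurable (Function.uncurry a)) (mc : Measurable (Function.uncurry c))
    (ha : ∀ α u, a α u ∈ Icc (0:ℝ) 1) (hc : ∀ α u, c α u ∈ Icc (0:ℝ) 1) :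
    Bud abar ubar K f g a c =
    (∫ u in (0:ℝ)..ubar, ∫ α in (0:ℝ)..abar, f α * g u * rFun g u * a α u)
      - K * ∫ u in (0:ℝ)..ubar, ∫ α in (0:ℝ)..abar, f α * g u * c α u := by
  have i1 := integrable_mul01 (int_w1 hf hg) (meas_flip ma) (fun p => ha _ _)
  have i2 := integrable_mul01 (int_w2 hf hg) (meas_flip mc) (fun p => hc _ _)
  have e1 := iter_eq habar hubar _ i1
  have e2 := iter_eq habar hubar _ i2
  simp only at e1 e2
  rw [e1, e2, Bud, integral_sub i1 (i2.const_mul K), integral_const_mul]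

lemma int_J (hf : IsDensityOn f abar) (hg : IsDensityOn g ubar) (ht : InterferenceSpec t αstar)
    (ma : Measurable (Function.uncurry a)) (ha : ∀ α u, a α u ∈ Icc (0:ℝ) 1) :
    Integrable (fun p : ℝ × ℝ => f p.2 * g p.1 * (min v (t p.2 p.1) - p.1) * a p.2 p.1)
      (mu abar ubar) :=
  integrable_mul01 (int_w3 hf hg ht) (meas_flip ma) (fun p => ha _ _)

lemma J_eq (habar : 0 < abar) (hubar : 0 < ubar)
    (hf : IsDensityOn f abar) (hg : IsDensityOn g ubar) (ht : InterferenceSpec t αstar)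
    (ma : Measurable (Function.uncurry a)) (ha : ∀ α u, a α u ∈ Icc (0:ℝ) 1) :
    J abar ubar v f g t a =
    ∫ p : ℝ × ℝ, f p.2 * g p.1 * (min v (t p.2 p.1) - p.1) * a p.2 p.1 ∂(mu abar ubar) :=
  iter_eq habar hubar _ (int_J hf hg ht ma ha)

/-- If a competitor is pointwise weakly better, optimality forces a.e. equality of integrands. -/
lemma ae_eq_of_better (habar : 0 < abar) (hubar : 0 < ubar)
    (hf : IsDensityOn f abar) (hg : IsDensityOn g ubar) (ht : InterferenceSpec t αstar)
    {a' : ℝ → ℝ → ℝ}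
    (ma : Measurable (Function.uncurry a)) (ha : ∀ α u, a α u ∈ Icc (0:ℝ) 1)
    (ma' : Measurable (Function.uncurry a')) (ha' : ∀ α u, a' α u ∈ Icc (0:ℝ) 1)
    (hm : Measurable αstar)
    (hR : ∀ p ∈ Reg αstar v, a p.2 p.1 ≤ a' p.2 p.1)
    (hN : ∀ p ∉ Reg αstar v, a' p.2 p.1 ≤ a p.2 p.1)
    (hJ : J abar ubar v f g t a' ≤ J abar ubar v f g t a) :
    ∀ᵐ p ∂(mu abar ubar), a p.2 p.1 = a' p.2 p.1 := by
  have hs := weight_sign (v := v) hf hg ht hm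
  rw [J_eq habar hubar hf hg ht ma ha, J_eq habar hubar hf hg ht ma' ha'] at hJ
  have i1 := int_J (v := v) hf hg ht ma ha
  have i2 := int_J (v := v) hf hg ht ma' ha'
  have hle : (fun p : ℝ × ℝ => f p.2 * g p.1 * (min v (t p.2 p.1) - p.1) * a p.2 p.1)
      ≤ᵐ[mu abar ubar] (fun p => f p.2 * g p.1 * (min v (t p.2 p.1) - p.1) * a' p.2 p.1) := by
    filter_upwards [hs] with p hp
    by_cases h : p ∈ Reg αstar v
    · exact mul_le_mul_of_nonneg_left (hR p h) (hp.1 h).le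
    · exact mul_le_mul_of_nonpos_left (hN p h) (hp.2 h).le
  have heq := (integral_eq_iff_of_ae_le i1 i2 hle).1 (le_antisymm (integral_mono_ae i1 i2 hle) hJ)
  filter_upwards [hs, heq] with p hp he
  by_cases h : p ∈ Reg αstar v
  · exact mul_left_cancel₀ (hp.1 h).ne' he
  · exact mul_left_cancel₀ (hp.2 h).ne he

open Classical in
lemma step1 (habar : 0 < abar) (hubar : 0 < ubar) (hK0 : 0 ≤ K)
    (hf : IsDensityOn f abar) (hg : IsDensityOn g ubar) (ht : InterferenceSpec t αstar)
    (hmono : Monotone αstar)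
    (hopt : OptimalRelaxed abar ubar v K f g t a c) (hB : 0 < Bud abar ubar K f g a c) :
    ∀ᵐ p ∂(mu abar ubar), a p.2 p.1 = if p ∈ Reg αstar v then 1 else a 0 p.1 := by
  obtain ⟨F, hbest⟩ := hopt
  set h : ℝ × ℝ → ℝ := fun p => |f p.2 * g p.1 * rFun g p.1| + K * |f p.2 * g p.1| with hh
  have ih : Integrable h (mu abar ubar) :=
    (int_w1 hf hg).abs.add ((int_w2 hf hg).abs.const_mul K)
  have mR := meas_Reg hmono.measurable v
  have mA : ∀ x r : ℝ, MeasurableSet (Prod.snd ⁻¹' (Metric.closedBall x r) : Set (ℝ × ℝ)) :=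
    fun x r => measurable_snd Metric.isClosed_closedBall.measurableSet
  rw [ae_iff]
  apply measure_null_of_locally_null
  intro q _
  -- choose a small ball
  have hlim : Filter.Tendsto (fun n : ℕ => ∫ p in Prod.snd ⁻¹' (Metric.closedBall q.2 (1 / ((n:ℝ) + 1))),
      h p ∂(mu abar ubar)) Filter.atTop (nhds 0) := by
    have := tendsto_setIntegral_of_antitone (μ := mu abar ubar) (f := h)
      (s := fun n : ℕ => Prod.snd ⁻¹' (Metric.closedBall q.2 (1 / ((n:ℝ) + 1))))
      (fun n => mA _ _) ?_ ⟨0, ih.integrableOn⟩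
    · convert this using 2
      symm
      apply setIntegral_measure_zero
      refine measure_mono_null (t := (univ : Set ℝ) ×ˢ {q.2}) ?_ ?_
      · intro p hp
        simp only [mem_iInter, mem_preimage, Metric.mem_closedBall] at hp
        refine ⟨mem_univ _, ?_⟩
        have : dist p.2 q.2 ≤ 0 := ge_of_tendsto' tendsto_one_div_add_atTop_nhds_zero_nat hp
        exact dist_le_zero.1 this
      · rw [mu, Measure.prod_prod]
        have : (volume.restrict (Ioc 0 abar)) {q.2} = 0 := by simp
        rw [this, mul_zero]
    · intro m n hmn
      exact preimage_mono (Metric.closedBall_subset_closedBall (Nat.one_div_le_one_div hmn))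
  obtain ⟨n, hn⟩ := (hlim.eventually (gt_mem_nhds hB)).exists
  set A : Set ℝ := Metric.closedBall q.2 (1 / ((n:ℝ) + 1)) with hA
  have mA' := mA q.2 (1 / ((n:ℝ) + 1))
  rw [← hA] at mA'
  set a' : ℝ → ℝ → ℝ := fun α u =>
    if α ∈ A then (if (u, α) ∈ Reg αstar v then 1 else a 0 u) else a α u with ha'
  set c' : ℝ → ℝ → ℝ := fun α u =>
    if α ∈ A then (if (u, α) ∈ Reg αstar v then 1 else 0) else c α u with hc'
  have ma0 : Measurable (fun p : ℝ × ℝ => a 0 p.1) :=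
    (meas_flip F.meas_a).comp (measurable_fst.prodMk measurable_const)
  have ma' : Measurable (Function.uncurry a') :=
    meas_flip' (Measurable.ite mA' (Measurable.ite mR measurable_const ma0) (meas_flip F.meas_a))
  have mc' : Measurable (Function.uncurry c') :=
    meas_flip' (Measurable.ite mA' (Measurable.ite mR measurable_const measurable_const)
      (meas_flip F.meas_c))
  have a01 : ∀ α u, a' α u ∈ Icc (0:ℝ) 1 := by
    intro α u
    simp only [ha']
    split_ifs
    · simp
    · exact F.mem_a _ _
    · exact F.mem_a _ _
  have c01 : ∀ α u, c' α u ∈ Icc (0:ℝ) 1 := by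
    intro α u
    simp only [hc']
    split_ifs
    · simp
    · simp
    · exact F.mem_c _ _
  have a'0 : ∀ u, a' 0 u = a 0 u := by
    intro u
    have : (u, (0:ℝ)) ∉ Reg αstar v := fun h => lt_irrefl _ h.1
    simp [ha', this]
  have hbud : 0 ≤ Bud abar ubar K f g a' c' := by
    have i1 := int_bud (K := K) hf hg F.meas_a F.meas_c F.mem_a F.mem_c
    have i2 := int_bud (K := K) hf hg ma' mc' a01 c01
    have : Bud abar ubar K f g a c - Bud abar ubar K f g a' c' ≤
        ∫ p in Prod.snd ⁻¹' A, h p ∂(mu abar ubar) := by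
      rw [Bud, Bud, ← integral_sub i1 i2, ← integral_indicator mA']
      refine integral_mono (i1.sub i2) (ih.indicator mA') fun p => ?_
      by_cases hp : p.2 ∈ A
      · rw [indicator_of_mem (show p ∈ Prod.snd ⁻¹' A from hp)]
        simp only [hh]
        have b1 : f p.2 * g p.1 * rFun g p.1 * (a p.2 p.1 - a' p.2 p.1)
            ≤ |f p.2 * g p.1 * rFun g p.1| := by
          refine (le_abs_self _).trans ?_
          rw [abs_mul]
          refine mul_le_of_le_one_right (abs_nonneg _) (abs_le.2 ⟨?_, ?_⟩) <;>
          linarith [(F.mem_a p.2 p.1).1, (F.mem_a p.2 p.1).2, (a01 p.2 p.1).1, (a01 p.2 p.1).2]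
        have b2 : f p.2 * g p.1 * (c' p.2 p.1 - c p.2 p.1) ≤ |f p.2 * g p.1| := by
          refine (le_abs_self _).trans ?_
          rw [abs_mul]
          refine mul_le_of_le_one_right (abs_nonneg _) (abs_le.2 ⟨?_, ?_⟩) <;>
          linarith [(F.mem_c p.2 p.1).1, (F.mem_c p.2 p.1).2, (c01 p.2 p.1).1, (c01 p.2 p.1).2]
        have b3 := mul_le_mul_of_nonneg_left b2 hK0
        linarith
      · rw [indicator_of_notMem (show p ∉ Prod.snd ⁻¹' A from hp)]
        have e1 : a' p.2 p.1 = a p.2 p.1 := if_neg hp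
        have e2 : c' p.2 p.1 = c p.2 p.1 := if_neg hp
        rw [e1, e2, sub_self]
    linarith
  have F' : FeasibleRelaxed abar ubar K f g a' c' := by
    refine ⟨ma', mc', a01, c01, ?_, ?_, ?_, ?_, ?_⟩
    · rw [bud_eq habar hubar hf hg ma' mc' a01 c01] at hbud
      linarith
    · intro α u
      rw [a'0]
      have := (F.mem_a 0 u).1
      simp only [ha', hc']
      split_ifs
      · simpa using this
      · simp
      · exact F.ic _ _
    · intro α u
      simp only [ha', hc']
      split_ifs
      · exact le_rfl
      · exact (F.mem_a 0 u).1
      · exact F.inspect _ _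
    · intro α u u' huu
      simp only [ha']
      by_cases hα : α ∈ A
      · simp only [hα, if_true]
        by_cases h1 : (u, α) ∈ Reg αstar v
        · have h2 : (u', α) ∈ Reg αstar v :=
            ⟨h1.1, (hmono huu).trans_lt h1.2.1, huu.trans_lt h1.2.2⟩
          simp [h1, h2]
        · simp only [h1, if_false]
          split_ifs
          · exact (F.mem_a _ _).2
          · exact F.u_mono _ _ _ huu
      · simp only [hα, if_false]
        exact F.u_mono _ _ _ huu
    · intro α u
      rw [a'0]
      simp only [ha']
      split_ifs
      · exact (F.mem_a _ _).2
      · exact le_rfl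
      · exact F.α_mono0 _ _
  have hfin := ae_eq_of_better habar hubar hf hg ht F.meas_a F.mem_a ma' a01 hmono.measurable
    (v := v) ?_ ?_ (hbest a' c' F')
  · refine ⟨{p | ¬ (a p.2 p.1 = if p ∈ Reg αstar v then 1 else a 0 p.1)} ∩ Prod.snd ⁻¹' A,
      inter_mem_nhdsWithin _ ?_, ?_⟩
    · exact continuous_snd.continuousAt.preimage_mem_nhds
        (Metric.closedBall_mem_nhds _ Nat.one_div_pos_of_nat)
    · refine measure_mono_null ?_ (ae_iff.1 hfin)
      rintro p ⟨h1, h2⟩ h3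
      apply h1
      rw [h3]
      exact if_pos h2
  · intro p hp
    simp only [ha']
    split_ifs
    · exact (F.mem_a _ _).2
    · exact le_rfl
  · intro p hp
    simp only [ha', hp, if_false]
    split_ifs
    · exact F.α_mono0 _ _
    · exact le_rfl

open Classical in
lemma step2 (habar : 0 < abar) (hubar : 0 < ubar) (hK0 : 0 ≤ K)
    (hf : IsDensityOn f abar) (hg : IsDensityOn g ubar) (ht : InterferenceSpec t αstar)
    (hmono : Monotone αstar) (hpos : ∀ u, 0 < u → 0 < αstar u)
    (hopt : OptimalRelaxed abar ubar v K f g t a c) (hB : 0 < Bud abar ubar K f g a c) :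
    ∀ᵐ p ∂(mu abar ubar), a 0 p.1 = 0 := by
  have hs1 := step1 habar hubar hK0 hf hg ht hmono hopt hB
  obtain ⟨F, hbest⟩ := hopt
  set h : ℝ × ℝ → ℝ := fun p => |f p.2 * g p.1 * rFun g p.1| + K * |f p.2 * g p.1| with hh
  have ih : Integrable h (mu abar ubar) :=
    (int_w1 hf hg).abs.add ((int_w2 hf hg).abs.const_mul K)
  have mR := meas_Reg hmono.measurable v
  obtain ⟨l, hl0, hl1, hl⟩ : ∃ l : ℝ, 0 < l ∧ l ≤ 1 ∧
      l * ∫ p, h p ∂(mu abar ubar) ≤ Bud abar ubar K f g a c := by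
    have hI : 0 ≤ ∫ p, h p ∂(mu abar ubar) := integral_nonneg fun p => by
      simp only [hh]; positivity
    set I := ∫ p, h p ∂(mu abar ubar)
    set B := Bud abar ubar K f g a c
    refine ⟨B / (I + B), by positivity, (div_le_one (by positivity)).2 (by linarith), ?_⟩
    rw [div_mul_eq_mul_div, div_le_iff₀ (by positivity)]
    nlinarith
  set a' : ℝ → ℝ → ℝ := fun α u =>
    if (u, α) ∈ Reg αstar v then 1 else (1 - l) * a 0 u with ha'
  set c' : ℝ → ℝ → ℝ := fun α u =>
    if (u, α) ∈ Reg αstar v then 1 - (1 - l) * a 0 u else 0 with hc'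
  have ma0 : Measurable (fun p : ℝ × ℝ => a 0 p.1) :=
    (meas_flip F.meas_a).comp (measurable_fst.prodMk measurable_const)
  have ma' : Measurable (Function.uncurry a') :=
    meas_flip' (Measurable.ite mR measurable_const (ma0.const_mul _))
  have mc' : Measurable (Function.uncurry c') :=
    meas_flip' (Measurable.ite mR ((ma0.const_mul _).const_sub _) measurable_const)
  have b01 : ∀ u, (1 - l) * a 0 u ∈ Icc (0:ℝ) 1 := by
    intro u
    obtain ⟨h1, h2⟩ := F.mem_a 0 u
    constructor <;> nlinarith
  have a01 : ∀ α u, a' α u ∈ Icc (0:ℝ) 1 := by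
    intro α u
    simp only [ha']
    split_ifs
    · simp
    · exact b01 u
  have c01 : ∀ α u, c' α u ∈ Icc (0:ℝ) 1 := by
    intro α u
    simp only [hc']
    split_ifs
    · have := b01 u
      exact ⟨by linarith [this.2], by linarith [this.1]⟩
    · simp
  have a'0 : ∀ u, a' 0 u = (1 - l) * a 0 u := by
    intro u
    have : (u, (0:ℝ)) ∉ Reg αstar v := fun h => lt_irrefl _ h.1
    simp [ha', this]
  have hbud : 0 ≤ Bud abar ubar K f g a' c' := by
    have i1 := int_bud (K := K) hf hg F.meas_a F.meas_c F.mem_a F.mem_c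
    have i2 := int_bud (K := K) hf hg ma' mc' a01 c01
    have : Bud abar ubar K f g a c - Bud abar ubar K f g a' c' ≤
        l * ∫ p, h p ∂(mu abar ubar) := by
      rw [Bud, Bud, ← integral_sub i1 i2, ← integral_const_mul]
      refine integral_mono_ae (i1.sub i2) (ih.const_mul l) ?_
      filter_upwards [hs1, ae_mem abar ubar] with p hp hm
      have hfg : 0 ≤ f p.2 * g p.1 :=
        (mul_pos (hf.pos _ ⟨hm.2.1.le, hm.2.2⟩) (hg.pos _ ⟨hm.1.1.le, hm.1.2⟩)).le
      obtain ⟨z0, z1⟩ := F.mem_a 0 p.1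
      have y0 := (F.mem_c p.2 p.1).1
      have hic := F.ic p.2 p.1
      have d1 : |a p.2 p.1 - a' p.2 p.1| ≤ l := by
        by_cases hpR : p ∈ Reg αstar v
        · simp only [hpR, if_true] at hp
          have e1 : a' p.2 p.1 = 1 := if_pos hpR
          rw [hp, e1]; simpa using hl0.le
        · simp only [hpR, if_false] at hp
          have e1 : a' p.2 p.1 = (1 - l) * a 0 p.1 := if_neg hpR
          rw [hp, e1, abs_le]; constructor <;> nlinarith
      have d2 : c' p.2 p.1 - c p.2 p.1 ≤ l := by
        by_cases hpR : p ∈ Reg αstar v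
        · simp only [hpR, if_true] at hp
          have e1 : c' p.2 p.1 = 1 - (1 - l) * a 0 p.1 := if_pos hpR
          rw [hp] at hic
          rw [e1]; nlinarith
        · have e1 : c' p.2 p.1 = 0 := if_neg hpR
          rw [e1]; linarith
      have b1 : f p.2 * g p.1 * rFun g p.1 * (a p.2 p.1 - a' p.2 p.1)
          ≤ |f p.2 * g p.1 * rFun g p.1| * l := by
        refine (le_abs_self _).trans ?_
        rw [abs_mul]
        exact mul_le_mul_of_nonneg_left d1 (abs_nonneg _)
      have b2 : f p.2 * g p.1 * (c' p.2 p.1 - c p.2 p.1) ≤ |f p.2 * g p.1| * l := by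
        rw [abs_of_nonneg hfg]
        exact mul_le_mul_of_nonneg_left d2 hfg
      have b3 := mul_le_mul_of_nonneg_left b2 hK0
      simp only [hh]
      linarith
    linarith
  have F' : FeasibleRelaxed abar ubar K f g a' c' := by
    refine ⟨ma', mc', a01, c01, ?_, ?_, ?_, ?_, ?_⟩
    · rw [bud_eq habar hubar hf hg ma' mc' a01 c01] at hbud
      linarith
    · intro α u
      rw [a'0]
      simp only [ha', hc']
      split_ifs
      · simp
      · simp
    · intro α u
      have := b01 u
      simp only [ha', hc']
      split_ifs
      · linarith [this.1]
      · exact this.1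
    · intro α u u' huu
      simp only [ha']
      by_cases h1 : (u, α) ∈ Reg αstar v
      · have h2 : (u', α) ∈ Reg αstar v :=
          ⟨h1.1, (hmono huu).trans_lt h1.2.1, huu.trans_lt h1.2.2⟩
        simp [h1, h2]
      · simp only [h1, if_false]
        split_ifs
        · exact (b01 u).2
        · exact mul_le_mul_of_nonneg_left (F.u_mono _ _ _ huu) (by linarith)
    · intro α u
      rw [a'0]
      simp only [ha']
      split_ifs
      · exact (b01 u).2
      · exact le_rfl
  have hfin := ae_eq_of_better habar hubar hf hg ht F.meas_a F.mem_a ma' a01 hmono.measurable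
    (v := v) ?_ ?_ (hbest a' c' F')
  · have h0 : ∀ᵐ p ∂(mu abar ubar), p ∉ Reg αstar v → a 0 p.1 = 0 := by
      filter_upwards [hfin, hs1] with p h1 h2 hp
      simp only [hp, if_false] at h2
      have e1 : a' p.2 p.1 = (1 - l) * a 0 p.1 := if_neg hp
      rw [h2, e1] at h1
      have : l * a 0 p.1 = 0 := by linarith
      exact (mul_eq_zero.1 this).resolve_left hl0.ne'
    have h1 := Measure.ae_ae_of_ae_prod h0
    have h2 : ∀ᵐ u ∂(volume.restrict (Ioc 0 ubar)), a 0 u = 0 := by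
      filter_upwards [h1, ae_restrict_mem measurableSet_Ioc] with u hu hu'
      have hlt : 0 < min abar (αstar u) := lt_min habar (hpos u hu'.1)
      have h3 : ∀ᵐ α ∂(volume.restrict (Ioc 0 (min abar (αstar u)))),
          ((u, α) ∉ Reg αstar v → a 0 u = 0) :=
        ae_restrict_of_ae_restrict_of_subset (Ioc_subset_Ioc_right (min_le_left _ _)) hu
      have : NeZero (volume.restrict (Ioc 0 (min abar (αstar u)))) := by
        refine ⟨fun h => ?_⟩
        rw [Measure.restrict_eq_zero, Real.volume_Ioc, ENNReal.ofReal_eq_zero] at h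
        linarith
      obtain ⟨α, hα, hα'⟩ := (h3.and (ae_restrict_mem measurableSet_Ioc)).exists
      exact hα fun hr => absurd (hα'.2.trans (min_le_right _ _)) (not_le.2 hr.2.1)
    exact Measure.quasiMeasurePreserving_fst.ae h2
  · intro p hp
    have e1 : a' p.2 p.1 = 1 := if_pos hp
    rw [e1]; exact (F.mem_a _ _).2
  · intro p hp
    have e1 : a' p.2 p.1 = (1 - l) * a 0 p.1 := if_neg hp
    rw [e1]
    have := (F.mem_a 0 p.1).1
    have := F.α_mono0 p.2 p.1
    nlinarith

lemma no_slack (habar : 0 < abar) (hubar : 0 < ubar) (hv : 0 < v) (hK0 : 0 ≤ K)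
    (hf : IsDensityOn f abar) (hg : IsDensityOn g ubar) (ht : InterferenceSpec t αstar)
    (hmono : Monotone αstar) (hpos : ∀ u, 0 < u → 0 < αstar u)
    (hK : Klow f g αstar v ≤ K)
    (hopt : OptimalRelaxed abar ubar v K f g t a c) : Bud abar ubar K f g a c ≤ 0 := by
  classical
  by_contra hB
  push Not at hB
  have hs1 := step1 habar hubar hK0 hf hg ht hmono hopt hB
  have hs2 := step2 habar hubar hK0 hf hg ht hmono hpos hopt hB
  obtain ⟨F, -⟩ := hopt
  have mR := meas_Reg hmono.measurable v
  have m1 : Measurable ((Reg αstar v).indicator (1 : ℝ × ℝ → ℝ)) := measurable_one.indicator mR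
  have h1 : ∀ p, (Reg αstar v).indicator (1 : ℝ × ℝ → ℝ) p ∈ Icc (0:ℝ) 1 := by
    intro p; by_cases h : p ∈ Reg αstar v <;> simp [h]
  have i1 := integrable_mul01 (int_w1 hf hg) m1 h1
  have i2 := integrable_mul01 (int_w2 hf hg) m1 h1
  have hle : Bud abar ubar K f g a c ≤
      (∫ p, f p.2 * g p.1 * rFun g p.1 * (Reg αstar v).indicator 1 p ∂(mu abar ubar))
      - K * ∫ p, f p.2 * g p.1 * (Reg αstar v).indicator 1 p ∂(mu abar ubar) := by
    rw [Bud, ← integral_const_mul, ← integral_sub i1 (i2.const_mul K)]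
    refine integral_mono_ae (int_bud (K := K) hf hg F.meas_a F.meas_c F.mem_a F.mem_c)
      (i1.sub (i2.const_mul K)) ?_
    filter_upwards [hs1, hs2, ae_mem abar ubar] with p e1 e2 hm
    have hfg : 0 ≤ f p.2 * g p.1 :=
      (mul_pos (hf.pos _ ⟨hm.2.1.le, hm.2.2⟩) (hg.pos _ ⟨hm.1.1.le, hm.1.2⟩)).le
    have hic := F.ic p.2 p.1
    have ea : a p.2 p.1 = (Reg αstar v).indicator 1 p := by
      rw [e1, e2]; simp [indicator]
    have ec : (Reg αstar v).indicator 1 p ≤ c p.2 p.1 := by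
      by_cases h : p ∈ Reg αstar v
      · rw [ea, e2] at hic
        simp only [indicator_of_mem h, Pi.one_apply] at hic ⊢
        linarith
      · simp only [indicator_of_notMem h]
        exact (F.mem_c _ _).1
    have := mul_le_mul_of_nonneg_left (mul_le_mul_of_nonneg_left ec hfg) hK0
    simp only [ea]
    linarith
  have hz : ∀ u, ubar < u → g u = 0 := fun u hu => hg.supp u fun h => absurd h.2 (not_le.2 hu)
  have eD : (∫ p, f p.2 * g p.1 * (Reg αstar v).indicator 1 p ∂(mu abar ubar))
      = ∫ u in (0:ℝ)..v, (1 - CDF f (αstar u)) * g u :=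
    reg_int habar hv hf hmono.measurable hpos (fun _ _ => rfl) hz (int_w2 hf hg)
  have eN : (∫ p, f p.2 * g p.1 * rFun g p.1 * (Reg αstar v).indicator 1 p ∂(mu abar ubar))
      = ∫ u in (0:ℝ)..v, (1 - CDF f (αstar u)) * (1 - CDF g u - u * g u) := by
    have := reg_int (ψ := fun u => g u * rFun g u) (φ := fun u => 1 - CDF g u - u * g u)
      (ubar := ubar) (v := v) habar hv hf hmono.measurable hpos ?_ ?_ ?_
    · rw [← this]
      simp only [mul_assoc]
    · intro u hu
      have := (hg.pos u ⟨hu.1.le, hu.2⟩).ne'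
      simp only [rFun]
      field_simp
    · intro u hu
      simp [hz u hu, cdf_top hg hubar hu]
    · simpa only [mul_assoc] using int_w1 hf hg
  have hD0 : 0 ≤ᵐ[mu abar ubar]
      (fun p : ℝ × ℝ => f p.2 * g p.1 * (Reg αstar v).indicator 1 p) := by
    filter_upwards [ae_mem abar ubar] with p hm
    exact mul_nonneg (mul_pos (hf.pos _ ⟨hm.2.1.le, hm.2.2⟩)
      (hg.pos _ ⟨hm.1.1.le, hm.1.2⟩)).le (h1 p).1
  rcases (integral_nonneg_of_ae hD0).eq_or_lt with hD | hD
  · have hz' := (integral_eq_zero_iff_of_nonneg_ae hD0 i2).1 hD.symm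
    have : (∫ p, f p.2 * g p.1 * rFun g p.1 * (Reg αstar v).indicator 1 p ∂(mu abar ubar)) = 0 := by
      apply integral_eq_zero_of_ae
      filter_upwards [hz'] with p hp
      simp only [Pi.zero_apply] at hp ⊢
      calc _ = (f p.2 * g p.1 * (Reg αstar v).indicator 1 p) * rFun g p.1 := by ring
        _ = 0 := by rw [hp, zero_mul]
    rw [this, ← hD] at hle
    linarith
  · rw [Klow, ← eN, ← eD, div_le_iff₀ hD] at hK
    linarith

end core

/-- if `K ≥ K_low`, the budget constraint holds with equality at an
optimal solution of the relaxed problem. -/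
theorem relaxed_budget_binds
    (abar ubar v K : ℝ) (habar : 0 < abar) (hubar : 0 < ubar) (hv : 0 < v) (hK0 : 0 ≤ K)
    (f g : ℝ → ℝ) (t : ℝ → ℝ → ℝ) (αstar : ℝ → ℝ)
    (hf : IsDensityOn f abar) (hg : IsDensityOn g ubar)
    (hr : StrictAntiOn (rFun g) (Icc 0 ubar))
    (ht : InterferenceSpec t αstar)
    (hK : Klow f g αstar v ≤ K)
    (a c : ℝ → ℝ → ℝ)
    (hopt : OptimalRelaxed abar ubar v K f g t a c) :
    (∫ u in (0:ℝ)..ubar, ∫ α in (0:ℝ)..abar, f α * g u * rFun g u * a α u)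
      = K * ∫ u in (0:ℝ)..ubar, ∫ α in (0:ℝ)..abar, f α * g u * c α u := by
  have F := hopt.1
  have hprop : Monotone αstar ∧ ∀ u, 0 < u → 0 < αstar u := by
    rcases ht with ⟨-, h⟩ | ⟨-, h⟩
    · exact ⟨fun x y hxy => by rw [h, h]; exact hxy, fun u hu => by rw [h]; exact hu⟩
    · exact ⟨fun x y _ => by rw [h, h], fun u _ => by rw [h]; exact one_pos⟩
  have h1 := no_slack habar hubar hv hK0 hf hg ht hprop.1 hprop.2 hK hopt
  rw [bud_eq habar hubar hf hg F.meas_a F.meas_c F.mem_a F.mem_c] at h1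
  exact le_antisymm (by linarith) F.budget

end Spectrum
end
end

section
/- Assume K > K_low and that r(u) := (1 − G(u))/g(u) − u is strictly decreasing on [0, ū]. Then every optimal pair (a°, c°) of the regulator's problem satisfies a°(α,u) = 0 and c°(α,u) = 0 for almost every (α,u) with α > 0 and u > v. -/
open MeasureTheory Set

noncomputable section

namespace Spectrum

/-- Feasibility without the budget equation. -/
structure NB (a c : ℝ → ℝ → ℝ) : Prop where
  meas_a : Measurable (Function.uncurry a)
  meas_c : Measurable (Function.uncurry c)
  mem_a : ∀ α u, a α u ∈ Icc (0:ℝ) 1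
  mem_c : ∀ α u, c α u ∈ Icc (0:ℝ) 1
  ic : ∀ α u, a α u * (1 - c α u) ≤ a 0 u
  inspect : ∀ α u, c α u ≤ a α u
  u_mono : ∀ α u u', u' ≤ u → a α u ≤ a α u'
  α_mono0 : ∀ α u, a 0 u ≤ a α u

open Classical in
/-- Set to one on `T`, truncate at `s` elsewhere. -/
def glue (T : Set (ℝ × ℝ)) (s : ℝ) (a : ℝ → ℝ → ℝ) (α u : ℝ) : ℝ :=
  if (α, u) ∈ T then 1 else if u ≤ s then a α u else 0

/-- Mix with full sharing below `s`. -/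
def mixS (s θ y : ℝ) (a : ℝ → ℝ → ℝ) (α u : ℝ) : ℝ :=
  if u ≤ s then (1 - θ) * a α u + θ * y else 0

lemma meas_glue {T : Set (ℝ × ℝ)} (hT : MeasurableSet T) (s : ℝ) {a : ℝ → ℝ → ℝ}
    (ha : Measurable (Function.uncurry a)) : Measurable (Function.uncurry (glue T s a)) := by
  have : Function.uncurry (glue T s a) = fun p : ℝ × ℝ =>
      T.indicator (fun _ => (1:ℝ)) p
        + Tᶜ.indicator ({p : ℝ × ℝ | p.2 ≤ s}.indicator (Function.uncurry a)) p := by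
    ext ⟨α, u⟩
    by_cases h : (α, u) ∈ T <;> by_cases h' : u ≤ s <;>
      simp [glue, Function.uncurry, h, h']
  rw [this]
  have h2 : MeasurableSet {p : ℝ × ℝ | p.2 ≤ s} := measurableSet_le measurable_snd measurable_const
  exact (measurable_const.indicator hT).add ((ha.indicator h2).indicator hT.compl)

lemma NB.glue {a c : ℝ → ℝ → ℝ} (h : NB a c) {T : Set (ℝ × ℝ)} (hT : MeasurableSet T)
    (hT0 : ∀ u, ((0:ℝ), u) ∉ T) (hTl : ∀ α u u', u' ≤ u → (α, u) ∈ T → (α, u') ∈ T) (s : ℝ) :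
    NB (glue T s a) (glue T s c) where
  meas_a := meas_glue hT s h.meas_a
  meas_c := meas_glue hT s h.meas_c
  mem_a α u := by
    have := h.mem_a α u
    unfold Spectrum.glue; split_ifs <;> simp_all
  mem_c α u := by
    have := h.mem_c α u
    unfold Spectrum.glue; split_ifs <;> simp_all
  ic α u := by
    have h0 := h.ic α u
    have h1 := (h.mem_a 0 u).1
    unfold Spectrum.glue; split_ifs <;> simp_all
  inspect α u := by
    have h0 := h.inspect α u
    unfold Spectrum.glue; split_ifs <;> simp_all
  u_mono α u u' huu := by
    have h0 := h.u_mono α u u' huu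
    have h1 := h.mem_a α u
    have h2 := h.mem_a α u'
    have h3 := hTl α u u' huu
    unfold Spectrum.glue; split_ifs <;> simp_all
    linarith
  α_mono0 α u := by
    have h0 := h.α_mono0 α u
    have h1 := h.mem_a 0 u
    unfold Spectrum.glue; split_ifs <;> simp_all

lemma meas_mix (s θ y : ℝ) {a : ℝ → ℝ → ℝ}
    (ha : Measurable (Function.uncurry a)) : Measurable (Function.uncurry (mixS s θ y a)) := by
  have h2 : MeasurableSet {p : ℝ × ℝ | p.2 ≤ s} := measurableSet_le measurable_snd measurable_const
  exact Measurable.ite h2 ((measurable_const.mul ha).add measurable_const) measurable_const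

lemma NB.mix {a c : ℝ → ℝ → ℝ} (h : NB a c) (s θ : ℝ) (h0 : 0 ≤ θ) (h1 : θ ≤ 1) :
    NB (mixS s θ 1 a) (mixS s θ 0 c) where
  meas_a := meas_mix s θ 1 h.meas_a
  meas_c := meas_mix s θ 0 h.meas_c
  mem_a α u := by
    obtain ⟨h2, h3⟩ := h.mem_a α u
    unfold mixS; split_ifs
    · constructor <;> nlinarith
    · simp
  mem_c α u := by
    obtain ⟨h2, h3⟩ := h.mem_c α u
    unfold mixS; split_ifs
    · constructor <;> nlinarith
    · simp
  ic α u := by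
    obtain ⟨h2, h3⟩ := h.mem_c α u
    obtain ⟨h4, h5⟩ := h.mem_a α u
    have h6 := h.ic α u
    unfold mixS; split_ifs
    · have e1 := mul_le_mul_of_nonneg_left h6 (sub_nonneg.2 h1)
      have e2 : 0 ≤ θ * (1 - θ) * (c α u * (1 - a α u)) :=
        mul_nonneg (mul_nonneg h0 (sub_nonneg.2 h1)) (mul_nonneg h2 (sub_nonneg.2 h5))
      nlinarith
    · simp
  inspect α u := by
    have := h.inspect α u
    unfold mixS; split_ifs
    · nlinarith
    · simp
  u_mono α u u' huu := by
    have h2 := h.u_mono α u u' huu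
    have h3 := h.mem_a α u'
    unfold mixS; split_ifs
    · nlinarith
    · linarith
    · nlinarith [h3.1]
    · simp
  α_mono0 α u := by
    have := h.α_mono0 α u
    unfold mixS; split_ifs
    · nlinarith
    · simp

lemma cont_trunc (Q : Measure (ℝ × ℝ)) (hQ : ∀ s : ℝ, ∀ᵐ p ∂Q, p.2 ≠ s) {φ : ℝ × ℝ → ℝ}
    (hφ : Integrable φ Q) :
    Continuous (fun s : ℝ => ∫ p, (if p.2 ≤ s then φ p else 0) ∂Q) := by
  rw [continuous_iff_continuousAt]
  intro s
  refine continuousAt_of_dominated (bound := fun p => ‖φ p‖) ?_ ?_ hφ.norm ?_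
  · refine Filter.Eventually.of_forall fun s => ?_
    have h2 : MeasurableSet {p : ℝ × ℝ | p.2 ≤ s} :=
      measurableSet_le measurable_snd measurable_const
    exact (hφ.indicator h2).aestronglyMeasurable
  · refine Filter.Eventually.of_forall fun s => Filter.Eventually.of_forall fun p => ?_
    split_ifs <;> simp
  · filter_upwards [hQ s] with p hp
    rcases lt_or_gt_of_ne hp with h | h
    · have : (fun x : ℝ => if p.2 ≤ x then φ p else 0) =ᶠ[nhds s] fun _ => φ p := by
        filter_upwards [lt_mem_nhds h] with x hx
        simp [hx.le]
      exact continuousAt_const.congr this.symm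
    · have : (fun x : ℝ => if p.2 ≤ x then φ p else 0) =ᶠ[nhds s] fun _ => 0 := by
        filter_upwards [gt_mem_nhds h] with x hx
        simp [not_le.2 hx]
      exact continuousAt_const.congr this.symm

lemma int_mul_bdd {Q : Measure (ℝ × ℝ)} {φ : ℝ × ℝ → ℝ} (hφ : Integrable φ Q)
    {a : ℝ → ℝ → ℝ} (ha : Measurable (Function.uncurry a))
    (hb : ∀ α u, a α u ∈ Icc (0:ℝ) 1) : Integrable (fun p => φ p * a p.1 p.2) Q := by
  refine hφ.mul_bdd (c := 1) ha.aestronglyMeasurable (Filter.Eventually.of_forall fun p => ?_)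
  have := hb p.1 p.2
  rw [Real.norm_eq_abs, abs_of_nonneg this.1]
  exact this.2

lemma J_glue_mono {Q : Measure (ℝ × ℝ)} (hQ : ∀ᵐ p ∂Q, 0 < p.1 ∧ 0 < p.2) {v s : ℝ} (hsv : s ≤ v)
    {w : ℝ → ℝ → ℝ} (hwint : Integrable (fun p => w p.1 p.2) Q)
    (hw1 : ∀ α u, v ≤ u → w α u ≤ 0)
    {T : Set (ℝ × ℝ)} (hT : MeasurableSet T)
    (hT0 : ∀ u, ((0:ℝ), u) ∉ T) (hTl : ∀ α u u', u' ≤ u → (α, u) ∈ T → (α, u') ∈ T)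
    (hTw : ∀ α u, 0 < α → 0 < u → (α, u) ∈ T → 0 ≤ w α u)
    (hTn : ∀ α u, 0 < α → 0 < u → (α, u) ∉ T → s < u → w α u ≤ 0)
    {a c : ℝ → ℝ → ℝ} (h : NB a c) :
    ∫ p, w p.1 p.2 * glue ∅ v a p.1 p.2 ∂Q ≤ ∫ p, w p.1 p.2 * glue T s a p.1 p.2 ∂Q := by
  have n1 := h.glue MeasurableSet.empty (by simp) (by simp) v
  have n2 := h.glue hT hT0 hTl s
  refine integral_mono_ae (int_mul_bdd hwint n1.meas_a n1.mem_a)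
    (int_mul_bdd hwint n2.meas_a n2.mem_a) ?_
  filter_upwards [hQ] with p hp
  obtain ⟨α, u⟩ := p
  have ha := h.mem_a α u
  have e1 := hTw α u hp.1 hp.2
  have e2 := hTn α u hp.1 hp.2
  have e3 := hw1 α u
  simp only [Spectrum.glue, mem_empty_iff_false, if_false]
  by_cases c1 : (α, u) ∈ T
  · have := e1 c1
    simp only [c1, if_true]
    split_ifs
    · nlinarith [ha.2]
    · simpa using this
  · simp only [c1, if_false]
    by_cases c2 : u ≤ v <;> by_cases c3 : u ≤ s <;> simp only [c2, c3, if_true, if_false]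
    · exact le_refl _
    · have := e2 c1 (not_le.1 c3)
      nlinarith [ha.1]
    · exact absurd (c3.trans hsv) c2
    · exact le_refl _

lemma int_trunc {Q : Measure (ℝ × ℝ)} {φ : ℝ × ℝ → ℝ} (hφ : Integrable φ Q) (s : ℝ) :
    Integrable (fun p : ℝ × ℝ => if p.2 ≤ s then φ p else 0) Q :=
  hφ.indicator (s := {p : ℝ × ℝ | p.2 ≤ s}) (measurableSet_le measurable_snd measurable_const)

/-- Budget surplus integrand. -/
def bI (r : ℝ → ℝ) (K : ℝ) (a c : ℝ → ℝ → ℝ) (p : ℝ × ℝ) : ℝ :=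
  r p.2 * a p.1 p.2 - K * c p.1 p.2

lemma int_bI {Q : Measure (ℝ × ℝ)} [IsFiniteMeasure Q] {r : ℝ → ℝ} {K : ℝ}
    (hr : Integrable (fun p : ℝ × ℝ => r p.2) Q) {a c : ℝ → ℝ → ℝ} (h : NB a c) :
    Integrable (bI r K a c) Q :=
  (int_mul_bdd hr h.meas_a h.mem_a).sub
    (int_mul_bdd (φ := fun _ => K) (integrable_const K) h.meas_c h.mem_c)

lemma case_pos {Q : Measure (ℝ × ℝ)} [IsFiniteMeasure Q] (hQ : ∀ᵐ p ∂Q, 0 < p.1 ∧ 0 < p.2)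
    (hQs : ∀ s : ℝ, ∀ᵐ p ∂Q, p.2 ≠ s) {v K : ℝ} (hv : 0 < v)
    {w : ℝ → ℝ → ℝ} {r : ℝ → ℝ} (hwint : Integrable (fun p => w p.1 p.2) Q)
    (hr : Integrable (fun p : ℝ × ℝ => r p.2) Q)
    (hw1 : ∀ α u, v ≤ u → w α u ≤ 0)
    {S : Set (ℝ × ℝ)} (hS : MeasurableSet S)
    (hS0 : ∀ u, ((0:ℝ), u) ∉ S) (hSl : ∀ α u u', u' ≤ u → (α, u) ∈ S → (α, u') ∈ S)
    (hSv : ∀ α u, (α, u) ∈ S → u ≤ v)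
    (hSw : ∀ α u, 0 < α → 0 < u → (α, u) ∈ S → 0 ≤ w α u)
    (hSn : ∀ α u, 0 < α → 0 < u → (α, u) ∉ S → w α u ≤ 0)
    (hFB : ∫ p, S.indicator (fun p => r p.2 - K) p ∂Q ≤ 0)
    {a c : ℝ → ℝ → ℝ} (h : NB a c)
    (hB : 0 ≤ ∫ p, bI r K (glue ∅ v a) (glue ∅ v c) p ∂Q) :
    ∃ a' c', NB a' c' ∧ ∫ p, bI r K a' c' p ∂Q = 0 ∧
      ∫ p, w p.1 p.2 * glue ∅ v a p.1 p.2 ∂Q ≤ ∫ p, w p.1 p.2 * a' p.1 p.2 ∂Q := by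
  have hrK : Integrable (fun p : ℝ × ℝ => r p.2 - K) Q := hr.sub (integrable_const K)
  have n0 := h.glue MeasurableSet.empty (by simp) (by simp) v
  have i0 := int_bI (K := K) hr n0
  have i1 := int_bI (K := K) hr h
  have hTm : ∀ s : ℝ, MeasurableSet (S ∩ {p : ℝ × ℝ | p.2 ≤ s}) := fun s =>
    hS.inter (measurableSet_le measurable_snd measurable_const)
  have hTl : ∀ s α u u', u' ≤ u → (α, u) ∈ S ∩ {p : ℝ × ℝ | p.2 ≤ s} →
      (α, u') ∈ S ∩ {p : ℝ × ℝ | p.2 ≤ s} := fun s α u u' h1 h2 =>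
    ⟨hSl _ _ _ h1 h2.1, le_trans h1 h2.2⟩
  -- first path
  set ψ : ℝ × ℝ → ℝ := S.indicator (fun p => r p.2 - K - bI r K (glue ∅ v a) (glue ∅ v c) p)
    with hψ
  have iψ : Integrable ψ Q := (hrK.sub i0).indicator hS
  set χ : ℝ × ℝ → ℝ := Sᶜ.indicator (bI r K a c) with hχ
  have iχ : Integrable χ Q := i1.indicator hS.compl
  have E1 : ∀ s, ∫ p, bI r K (glue (S ∩ {p | p.2 ≤ s}) v a) (glue (S ∩ {p | p.2 ≤ s}) v c) p ∂Q
      = (∫ p, bI r K (glue ∅ v a) (glue ∅ v c) p ∂Q)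
        + ∫ p, (if p.2 ≤ s then ψ p else 0) ∂Q := by
    intro s
    rw [← integral_add i0 (int_trunc iψ s)]
    congr 1
    ext ⟨α, u⟩
    by_cases h1 : (α, u) ∈ S <;> by_cases h2 : u ≤ s <;> by_cases h3 : u ≤ v <;>
      simp [bI, Spectrum.glue, hψ, h1, h2, h3]
  have E2 : ∀ s, ∫ p, bI r K (glue S s a) (glue S s c) p ∂Q
      = (∫ p, S.indicator (fun p => r p.2 - K) p ∂Q)
        + ∫ p, (if p.2 ≤ s then χ p else 0) ∂Q := by
    intro s
    rw [← integral_add (hrK.indicator hS) (int_trunc iχ s)]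
    congr 1
    ext ⟨α, u⟩
    by_cases h1 : (α, u) ∈ S <;> by_cases h2 : u ≤ s <;>
      simp [bI, Spectrum.glue, hχ, h1, h2]
  have C1 := cont_trunc Q hQs iψ
  have C2 := cont_trunc Q hQs iχ
  have Z : ∀ φ : ℝ × ℝ → ℝ, ∫ p, (if p.2 ≤ 0 then φ p else 0) ∂Q = 0 := by
    intro φ
    rw [integral_eq_zero_of_ae]
    filter_upwards [hQ] with p hp
    simp [not_le.2 hp.2]
  have hSS : S ∩ {p : ℝ × ℝ | p.2 ≤ v} = S := by
    ext ⟨α, u⟩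
    simp only [mem_inter_iff, mem_ofPred_eq, and_iff_left_iff_imp]
    exact hSv α u
  by_cases hm : 0 ≤ ∫ p, bI r K (glue S v a) (glue S v c) p ∂Q
  · -- second path
    obtain ⟨s, hs, hs'⟩ := intermediate_value_Icc hv.le
      (f := fun s => ∫ p, bI r K (glue S s a) (glue S s c) p ∂Q)
      (by simp only [E2]; exact (continuous_const.add C2).continuousOn)
      (show (0:ℝ) ∈ Icc _ _ from ⟨by simp only [E2, Z]; linarith, hm⟩)
    refine ⟨_, _, h.glue hS hS0 hSl s, hs', ?_⟩
    exact J_glue_mono hQ hs.2 hwint hw1 hS hS0 hSl hSw (fun α u h1 h2 h3 _ => hSn α u h1 h2 h3) h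
  · obtain ⟨s, hs, hs'⟩ := intermediate_value_Icc' hv.le
      (f := fun s => ∫ p, bI r K (glue (S ∩ {p | p.2 ≤ s}) v a)
        (glue (S ∩ {p | p.2 ≤ s}) v c) p ∂Q)
      (by simp only [E1]; exact (continuous_const.add C1).continuousOn)
      (show (0:ℝ) ∈ Icc _ _ from ⟨by simp only [hSS]; exact (not_le.1 hm).le,
        by simp only [E1, Z]; linarith⟩)
    have hT0 : ∀ u, ((0:ℝ), u) ∉ S ∩ {p : ℝ × ℝ | p.2 ≤ s} := fun u hu => hS0 u hu.1
    refine ⟨_, _, h.glue (hTm s) hT0 (hTl s) v, hs', ?_⟩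
    exact J_glue_mono hQ le_rfl hwint hw1 (hTm s) hT0 (hTl s)
      (fun α u h1 h2 h3 => hSw α u h1 h2 h3.1) (fun α u _ _ _ h4 => hw1 α u h4.le) h

lemma case_neg {A U : Measure ℝ} [IsProbabilityMeasure A] [IsProbabilityMeasure U]
    {v ubar K : ℝ} (hv : 0 < v) (hvu : v < ubar) (hK : 0 ≤ K)
    (hU : ∀ᵐ p ∂(A.prod U), 0 < p.1 ∧ p.2 ∈ Ioc 0 ubar)
    {w : ℝ → ℝ → ℝ} {r : ℝ → ℝ} (hwint : Integrable (fun p => w p.1 p.2) (A.prod U))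
    (hwv : Integrable (fun α => w α v) A)
    (hrU : Integrable r U) (hr : StrictAntiOn r (Icc 0 ubar))
    (hrK : r v ≤ K)
    (hw1 : ∀ α u, v ≤ u → w α u ≤ 0)
    (hw3 : ∀ α u, v < u → w α u ≤ w α v)
    (hw4 : ∀ α u, 0 < α → 0 < u → u ≤ v → u / v * w α v ≤ w α u)
    {a c : ℝ → ℝ → ℝ} (h : NB a c)
    (hB0 : ∫ p, bI r K a c p ∂(A.prod U) = 0)
    (hB : ∫ p, bI r K (glue ∅ v a) (glue ∅ v c) p ∂(A.prod U) < 0)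
    (hJ : ∫ p, w p.1 p.2 * a p.1 p.2 ∂(A.prod U)
      < ∫ p, w p.1 p.2 * glue ∅ v a p.1 p.2 ∂(A.prod U)) :
    ∃ a' c', NB a' c' ∧ ∫ p, bI r K a' c' p ∂(A.prod U) = 0 ∧
      ∫ p, w p.1 p.2 * a p.1 p.2 ∂(A.prod U) < ∫ p, w p.1 p.2 * a' p.1 p.2 ∂(A.prod U) := by
  set Q := A.prod U with hQ
  have hrQ : Integrable (fun p : ℝ × ℝ => r p.2) Q := hrU.comp_snd A
  have n0 := h.glue MeasurableSet.empty (by simp) (by simp) v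
  have i0 := int_bI (K := K) hrQ n0
  have i1 := int_bI (K := K) hrQ h
  have hvI : v ∈ Icc 0 ubar := ⟨hv.le, hvu.le⟩
  have hca : ∀ α u, a α u - a 0 u ≤ c α u := by
    intro α u
    have e1 := h.ic α u
    have e2 := h.mem_a α u
    have e3 := h.mem_c α u
    nlinarith [e2.2, e3.1]
  have rpos : 0 < r v := by
    by_contra hn
    push Not at hn
    have : ∫ p, bI r K a c p ∂Q ≤ ∫ p, bI r K (glue ∅ v a) (glue ∅ v c) p ∂Q := by
      refine integral_mono_ae i1 i0 ?_
      filter_upwards [hU] with p hp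
      obtain ⟨α, u⟩ := p
      simp only [bI, Spectrum.glue, mem_empty_iff_false, if_false]
      split_ifs with hu
      · exact le_refl _
      · have := hr hvI (Ioc_subset_Icc_self hp.2) (not_le.1 hu)
        simp only at this
        nlinarith [(h.mem_a α u).1, (h.mem_c α u).1, mul_nonneg hK (h.mem_c α u).1]
    linarith
  set E := ∫ α, w α v ∂A with hE
  have hE0 : E ≤ 0 := integral_nonpos fun α => hw1 α v le_rfl
  set lam := -E / r v with hlam
  have lam0 : 0 ≤ lam := div_nonneg (by linarith) rpos.le
  set z : ℝ → ℝ := fun α => w α v + lam * r v with hz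
  have iz : Integrable z A := hwv.add (integrable_const _)
  have hz0 : ∫ α, z α ∂A = 0 := by
    rw [hz, integral_add hwv (integrable_const _)]
    simp only [integral_const, probReal_univ, one_smul, ← hE, hlam]
    field_simp
    ring
  have izQ : Integrable (fun p : ℝ × ℝ => z p.1) Q := iz.comp_fst U
  have hzh : ∀ k : ℝ → ℝ, ∫ p : ℝ × ℝ, z p.1 * k p.2 ∂Q = 0 := by
    intro k
    rw [hQ, integral_prod_mul, hz0, zero_mul]
  have ma0 : Measurable (fun u => a 0 u) := h.meas_a.comp (measurable_const.prodMk measurable_id)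
  set h1 : ℝ → ℝ := fun u => if u ≤ v then 0 else a 0 u with hh1
  have mh1 : Measurable h1 := Measurable.ite measurableSet_Iic measurable_const ma0
  have bh1 : ∀ u, h1 u ∈ Icc (0:ℝ) 1 := by
    intro u
    have := h.mem_a 0 u
    simp only [hh1]; split_ifs <;> simp_all
  set h2 : ℝ → ℝ := fun u => if u ≤ v then if 0 ≤ u then (1 - a 0 u) * (u / v) else 0 else 0
    with hh2
  have mh2 : Measurable h2 := Measurable.ite measurableSet_Iic (Measurable.ite measurableSet_Ici
    ((measurable_const.sub ma0).mul (measurable_id.div_const v)) measurable_const) measurable_const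
  have bh2 : ∀ u, h2 u ∈ Icc (0:ℝ) 1 := by
    intro u
    have := h.mem_a 0 u
    simp only [hh2]; split_ifs with c1 c2
    · have d1 : u / v ≤ 1 := (div_le_one hv).2 c1
      have d2 : 0 ≤ u / v := by positivity
      constructor
      · exact mul_nonneg (by linarith [this.2]) d2
      · exact mul_le_one₀ (by linarith [this.1]) d2 d1
    · simp
    · simp
  have U1 : ∀ {φ : ℝ × ℝ → ℝ}, Integrable φ Q → Integrable (fun p => φ p * h1 p.2) Q :=
    fun hφ => int_mul_bdd hφ (a := fun _ u => h1 u) (mh1.comp measurable_snd) (fun _ u => bh1 u)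
  have U2 : ∀ {φ : ℝ × ℝ → ℝ}, Integrable φ Q → Integrable (fun p => φ p * h2 p.2) Q :=
    fun hφ => int_mul_bdd hφ (a := fun _ u => h2 u) (mh2.comp measurable_snd) (fun _ u => bh2 u)
  set J0 := ∫ p, w p.1 p.2 * a p.1 p.2 ∂Q
  set J1 := ∫ p, w p.1 p.2 * glue ∅ v a p.1 p.2 ∂Q
  set B1 := ∫ p, bI r K (glue ∅ v a) (glue ∅ v c) p ∂Q
  have iJ0 := int_mul_bdd hwint h.meas_a h.mem_a
  have iJ1 := int_mul_bdd hwint n0.meas_a n0.mem_a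
  have irv : Integrable (fun p : ℝ × ℝ => r p.2 - r v) Q := hrQ.sub (integrable_const _)
  have claimA : J0 < J1 + lam * B1 := by
    rcases lam0.eq_or_lt with hl | hl
    · rw [← hl]; linarith
    by_contra hn
    push Not at hn
    have step : ∫ p, (w p.1 p.2 * a p.1 p.2 + lam * bI r K a c p) ∂Q
        ≤ ∫ p, ((w p.1 p.2 * glue ∅ v a p.1 p.2 + lam * bI r K (glue ∅ v a) (glue ∅ v c) p)
          + (z p.1 * h1 p.2 + lam * ((r p.2 - r v) * h1 p.2))) ∂Q := by
      refine integral_mono_ae (iJ0.add (i1.const_mul lam))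
        ((iJ1.add (i0.const_mul lam)).add ((U1 izQ).add ((U1 irv).const_mul lam))) ?_
      filter_upwards [hU] with p hp
      obtain ⟨α, u⟩ := p
      simp only [bI, Spectrum.glue, mem_empty_iff_false, if_false, hh1, hz]
      split_ifs with hu
      · linarith
      · have e0 : r u < r v := hr hvI (Ioc_subset_Icc_self hp.2) (not_le.1 hu)
        have e1 := hw3 α u (not_le.1 hu)
        have e2 := hw1 α v le_rfl
        have e3 := hca α u
        have e4 := h.α_mono0 α u
        have e5 := h.mem_a 0 u
        have e6 : lam * K * (a α u - a 0 u) ≤ lam * K * c α u :=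
          mul_le_mul_of_nonneg_left e3 (mul_nonneg hl.le hK)
        have e7 : (a α u - a 0 u) * (w α u + lam * (r u - K)) ≤ 0 := by
          refine mul_nonpos_of_nonneg_of_nonpos (by linarith) ?_
          have : lam * (r u - K) ≤ 0 := mul_nonpos_of_nonneg_of_nonpos hl.le (by linarith)
          linarith
        have e8 : a 0 u * w α u ≤ a 0 u * w α v := mul_le_mul_of_nonneg_left e1 e5.1
        nlinarith
    have t1 : Integrable (fun p : ℝ × ℝ => w p.1 p.2 * glue ∅ v a p.1 p.2
        + lam * bI r K (glue ∅ v a) (glue ∅ v c) p) Q := iJ1.add (i0.const_mul lam)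
    have t2 : Integrable (fun p : ℝ × ℝ => z p.1 * h1 p.2 + lam * ((r p.2 - r v) * h1 p.2)) Q :=
      (U1 izQ).add ((U1 irv).const_mul lam)
    rw [integral_add iJ0 (i1.const_mul lam), integral_add t1 t2, integral_add iJ1 (i0.const_mul lam),
      integral_add (U1 izQ) ((U1 irv).const_mul lam), integral_const_mul, integral_const_mul,
      integral_const_mul, hzh h1, hB0] at step
    have hX : 0 ≤ ∫ p, (r p.2 - r v) * h1 p.2 ∂Q := by
      by_contra hX
      have := mul_neg_of_pos_of_neg hl (not_le.1 hX)
      have : J0 + lam * 0 ≤ J1 + lam * B1 + (0 + lam * ∫ p, (r p.2 - r v) * h1 p.2 ∂Q) := step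
      linarith
    have nonneg : 0 ≤ᵐ[Q] fun p => (r v - r p.2) * h1 p.2 := by
      filter_upwards [hU] with p hp
      obtain ⟨α, u⟩ := p
      simp only [Pi.zero_apply, hh1]
      split_ifs with hu
      · simp
      · have e0 : r u < r v := hr hvI (Ioc_subset_Icc_self hp.2) (not_le.1 hu)
        exact mul_nonneg (by linarith) (h.mem_a 0 u).1
    have ii : Integrable (fun p : ℝ × ℝ => (r v - r p.2) * h1 p.2) Q :=
      U1 ((integrable_const _).sub hrQ)
    have eq0 : ∫ p, (r v - r p.2) * h1 p.2 ∂Q = 0 := by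
      refine le_antisymm ?_ (integral_nonneg_of_ae nonneg)
      have : ∫ p, (r v - r p.2) * h1 p.2 ∂Q = - ∫ p, (r p.2 - r v) * h1 p.2 ∂Q := by
        rw [← integral_neg]; congr 1; ext p; ring
      linarith
    rw [integral_eq_zero_iff_of_nonneg_ae nonneg ii] at eq0
    have : ∫ p, bI r K a c p ∂Q ≤ ∫ p, bI r K (glue ∅ v a) (glue ∅ v c) p ∂Q := by
      refine integral_mono_ae i1 i0 ?_
      filter_upwards [hU, eq0] with p hp hp0
      obtain ⟨α, u⟩ := p
      simp only [hh1, Pi.zero_apply] at hp0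
      simp only [bI, Spectrum.glue, mem_empty_iff_false, if_false]
      split_ifs with hu
      · exact le_refl _
      · rw [if_neg hu] at hp0
        have e0 : r u < r v := hr hvI (Ioc_subset_Icc_self hp.2) (not_le.1 hu)
        have e1 : a 0 u = 0 := by
          rcases mul_eq_zero.1 hp0 with h3 | h3
          · linarith
          · exact h3
        have e3 := hca α u
        rw [e1] at e3
        have e4 := mul_le_mul_of_nonneg_left e3 hK
        nlinarith [(h.mem_a α u).1]
    linarith
  -- full sharing below `v`
  set k : ℝ → ℝ → ℝ := fun _ u => if u ≤ v then 1 else 0 with hk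
  have mk : Measurable (Function.uncurry k) :=
    (Measurable.ite measurableSet_Iic measurable_const measurable_const :
      Measurable (fun u : ℝ => if u ≤ v then (1:ℝ) else 0)).comp measurable_snd
  have bk : ∀ α u, k α u ∈ Icc (0:ℝ) 1 := by
    intro α u; simp only [hk]; split_ifs <;> simp
  have iJs := int_mul_bdd hwint mk bk
  have iBs := int_mul_bdd hrQ mk bk
  set Js := ∫ p, w p.1 p.2 * k p.1 p.2 ∂Q
  set Bs := ∫ p, r p.2 * k p.1 p.2 ∂Q
  have claimB : J1 + lam * B1 ≤ Js + lam * Bs := by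
    have step : ∫ p, (w p.1 p.2 * glue ∅ v a p.1 p.2
          + lam * bI r K (glue ∅ v a) (glue ∅ v c) p) ∂Q
        ≤ ∫ p, ((w p.1 p.2 * k p.1 p.2 + lam * (r p.2 * k p.1 p.2)) - z p.1 * h2 p.2) ∂Q := by
      refine integral_mono_ae (iJ1.add (i0.const_mul lam))
        ((iJs.add (iBs.const_mul lam)).sub (U2 izQ)) ?_
      filter_upwards [hU] with p hp
      obtain ⟨α, u⟩ := p
      have hu0 : 0 < u := hp.2.1
      simp only [bI, Spectrum.glue, mem_empty_iff_false, if_false, hh2, hz, hk, hu0.le, if_true]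
      split_ifs with hu
      · have e0 : r v ≤ r u := hr.antitoneOn (Ioc_subset_Icc_self hp.2) hvI hu
        have e1 := hw4 α u hp.1 hu0 hu
        have e2 := hw1 α v le_rfl
        have e3 := hca α u
        have e4 := h.α_mono0 α u
        have e5 := (h.mem_a α u).2
        have d1 : u / v ≤ 1 := (div_le_one hv).2 hu
        have d2 : 0 ≤ u / v := by positivity
        have e6 : lam * K * (a α u - a 0 u) ≤ lam * K * c α u :=
          mul_le_mul_of_nonneg_left e3 (mul_nonneg lam0 hK)
        have f0 : 0 ≤ lam * r v := mul_nonneg lam0 rpos.le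
        have f1 : u / v * (lam * r v) ≤ lam * r v := by nlinarith
        have f2 : lam * r v ≤ lam * r u := mul_le_mul_of_nonneg_left e0 lam0
        have f3 : lam * r v ≤ lam * K := mul_le_mul_of_nonneg_left hrK lam0
        have f4 : u / v * w α v ≤ 0 := mul_nonpos_of_nonneg_of_nonpos d2 e2
        set ζ := u / v * (w α v + lam * r v) with hζ
        have g1 : ζ ≤ w α u + lam * r u := by rw [hζ, mul_add]; linarith
        have g2 : ζ ≤ lam * K := by rw [hζ, mul_add]; linarith
        have g3 : (1 - a α u) * ζ ≤ (1 - a α u) * (w α u + lam * r u) :=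
          mul_le_mul_of_nonneg_left g1 (by linarith)
        have g4 : (a α u - a 0 u) * ζ ≤ (a α u - a 0 u) * (lam * K) :=
          mul_le_mul_of_nonneg_left g2 (by linarith)
        have g5 : (w α v + lam * r v) * ((1 - a 0 u) * (u / v)) = (1 - a 0 u) * ζ := by
          rw [hζ]; ring
        rw [g5]
        nlinarith
      · simp
    have t1 : Integrable (fun p : ℝ × ℝ => w p.1 p.2 * k p.1 p.2
        + lam * (r p.2 * k p.1 p.2)) Q := iJs.add (iBs.const_mul lam)
    rw [integral_add iJ1 (i0.const_mul lam), integral_sub t1 (U2 izQ),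
      integral_add iJs (iBs.const_mul lam), integral_const_mul, integral_const_mul, hzh h2,
      sub_zero] at step
    exact step
  have Bs0 : 0 ≤ Bs := by
    refine integral_nonneg_of_ae ?_
    filter_upwards [hU] with p hp
    obtain ⟨α, u⟩ := p
    simp only [Pi.zero_apply, hk]
    split_ifs with hu
    · have e0 : r v ≤ r u := hr.antitoneOn (Ioc_subset_Icc_self hp.2) hvI hu
      nlinarith
    · simp
  set θ := -B1 / (Bs - B1) with hθ
  have hd : 0 < Bs - B1 := by linarith
  have θ0 : 0 ≤ θ := div_nonneg (by linarith) hd.le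
  have θ1 : θ ≤ 1 := (div_le_one hd).2 (by linarith)
  have hmixB : (1 - θ) * B1 + θ * Bs = 0 := by
    rw [hθ]; field_simp; ring
  have eB : ∫ p, bI r K (mixS v θ 1 a) (mixS v θ 0 c) p ∂Q = (1 - θ) * B1 + θ * Bs := by
    rw [← integral_const_mul, ← integral_const_mul,
      ← integral_add (i0.const_mul _) (iBs.const_mul _)]
    congr 1
    ext ⟨α, u⟩
    simp only [bI, mixS, Spectrum.glue, mem_empty_iff_false, if_false, hk]
    split_ifs <;> ring
  have eJ : ∫ p, w p.1 p.2 * mixS v θ 1 a p.1 p.2 ∂Q = (1 - θ) * J1 + θ * Js := by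
    rw [← integral_const_mul, ← integral_const_mul,
      ← integral_add (iJ1.const_mul _) (iJs.const_mul _)]
    congr 1
    ext ⟨α, u⟩
    simp only [mixS, Spectrum.glue, mem_empty_iff_false, if_false, hk]
    split_ifs <;> ring
  refine ⟨_, _, h.mix v θ θ0 θ1, eB.trans hmixB, ?_⟩
  rw [eJ]
  have q1 := mul_le_mul_of_nonneg_left claimB θ0
  nlinarith

lemma core {A U : Measure ℝ} [IsProbabilityMeasure A] [IsProbabilityMeasure U]
    {v ubar K : ℝ} (hv : 0 < v) (hvu : v < ubar) (hK : 0 ≤ K)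
    (hU : ∀ᵐ p ∂(A.prod U), 0 < p.1 ∧ p.2 ∈ Ioc 0 ubar)
    (hQs : ∀ s : ℝ, ∀ᵐ p ∂(A.prod U), p.2 ≠ s)
    {w : ℝ → ℝ → ℝ} {r : ℝ → ℝ} (hwint : Integrable (fun p => w p.1 p.2) (A.prod U))
    (hwv : Integrable (fun α => w α v) A)
    (hrU : Integrable r U) (hr : StrictAntiOn r (Icc 0 ubar))
    (hw1 : ∀ α u, v ≤ u → w α u ≤ 0)
    (hw3 : ∀ α u, v < u → w α u ≤ w α v)
    (hw4 : ∀ α u, 0 < α → 0 < u → u ≤ v → u / v * w α v ≤ w α u)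
    {S : Set (ℝ × ℝ)} (hS : MeasurableSet S)
    (hS0 : ∀ u, ((0:ℝ), u) ∉ S) (hSl : ∀ α u u', u' ≤ u → (α, u) ∈ S → (α, u') ∈ S)
    (hSv : ∀ α u, (α, u) ∈ S → u ≤ v)
    (hSw : ∀ α u, 0 < α → 0 < u → (α, u) ∈ S → 0 ≤ w α u)
    (hSn : ∀ α u, 0 < α → 0 < u → (α, u) ∉ S → w α u ≤ 0)
    (hFB : ∫ p, S.indicator (fun p => r p.2 - K) p ∂(A.prod U) ≤ 0)
    {a c : ℝ → ℝ → ℝ} (h : NB a c)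
    (hB0 : ∫ p, bI r K a c p ∂(A.prod U) = 0)
    (hopt : ∀ a' c', NB a' c' → ∫ p, bI r K a' c' p ∂(A.prod U) = 0 →
      ∫ p, w p.1 p.2 * a' p.1 p.2 ∂(A.prod U) ≤ ∫ p, w p.1 p.2 * a p.1 p.2 ∂(A.prod U)) :
    ∫ p, w p.1 p.2 * glue ∅ v a p.1 p.2 ∂(A.prod U)
      ≤ ∫ p, w p.1 p.2 * a p.1 p.2 ∂(A.prod U) := by
  by_contra hJ
  push Not at hJ
  have hQ : ∀ᵐ p ∂(A.prod U), 0 < p.1 ∧ 0 < p.2 := hU.mono fun p hp => ⟨hp.1, hp.2.1⟩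
  have hrQ : Integrable (fun p : ℝ × ℝ => r p.2) (A.prod U) := hrU.comp_snd A
  by_cases hB : 0 ≤ ∫ p, bI r K (glue ∅ v a) (glue ∅ v c) p ∂(A.prod U)
  · obtain ⟨a', c', n, b, j⟩ := case_pos hQ hQs hv hwint hrQ hw1 hS hS0 hSl hSv hSw hSn hFB h hB
    have := hopt a' c' n b
    linarith
  · by_cases hrK : r v ≤ K
    · obtain ⟨a', c', n, b, j⟩ := case_neg hv hvu hK hU hwint hwv hrU hr hrK hw1 hw3 hw4 h hB0
        (not_le.1 hB) hJ
      have := hopt a' c' n b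
      linarith
    · have nonneg : 0 ≤ ∫ p, S.indicator (fun p => r p.2 - K) p ∂(A.prod U) := by
        refine integral_nonneg_of_ae ?_
        filter_upwards [hU] with p hp
        obtain ⟨α, u⟩ := p
        by_cases hs : (α, u) ∈ S
        · have e0 : r v ≤ r u := hr.antitoneOn (Ioc_subset_Icc_self hp.2) ⟨hv.le, hvu.le⟩
            (hSv α u hs)
          simp [hs]
          linarith
        · simp [hs]
      have z0 := le_antisymm hFB nonneg
      have n := h.glue hS hS0 hSl 0
      have b : ∫ p, bI r K (glue S 0 a) (glue S 0 c) p ∂(A.prod U) = 0 := by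
        refine Eq.trans (integral_congr_ae ?_) z0
        filter_upwards [hQ] with p hp
        obtain ⟨α, u⟩ := p
        have : ¬ u ≤ 0 := not_le.2 hp.2
        by_cases hs : (α, u) ∈ S <;> simp [bI, Spectrum.glue, hs, this]
      have := hopt _ _ n b
      have := J_glue_mono hQ hv.le hwint hw1 hS hS0 hSl hSw
        (fun α u h1 h2 h3 _ => hSn α u h1 h2 h3) h
      linarith

/-- The probability measure on `(0, b]` with density `f`. -/
def dM (f : ℝ → ℝ) (b : ℝ) : Measure ℝ :=
  (volume.restrict (Ioc 0 b)).withDensity (fun x => ENNReal.ofReal (f x))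

lemma IsDensityOn.nonneg {f : ℝ → ℝ} {b : ℝ} (h : IsDensityOn f b) (x : ℝ) : 0 ≤ f x := by
  by_cases hx : x ∈ Icc 0 b
  · exact (h.pos x hx).le
  · exact (h.supp x hx).ge

lemma IsDensityOn.meas {f : ℝ → ℝ} {b : ℝ} (h : IsDensityOn f b) : Measurable f := by
  have : f = (Icc 0 b).piecewise f (fun _ => 0) := by
    ext x
    by_cases hx : x ∈ Icc 0 b
    · simp [Set.piecewise, hx]
    · simp only [Set.piecewise, hx, if_false, h.supp x hx]
  rw [this]
  exact h.cont.measurable_piecewise continuousOn_const measurableSet_Icc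

lemma IsDensityOn.integ {f : ℝ → ℝ} {b : ℝ} (h : IsDensityOn f b) (x y : ℝ) :
    IntervalIntegrable f volume x y := by
  have h1 : IntegrableOn f (Icc 0 b) := h.cont.integrableOn_Icc
  have h2 : Integrable f volume := by
    rw [← integrableOn_iff_integrable_of_support_subset (s := Icc 0 b)]
    · exact h1
    · intro x hx
      by_contra hn
      exact hx (h.supp x hn)
  exact h2.intervalIntegrable

lemma dM_integral {f : ℝ → ℝ} {b : ℝ} (hb : 0 < b) (h : IsDensityOn f b) (k : ℝ → ℝ) :
    ∫ x, k x ∂(dM f b) = ∫ x in (0:ℝ)..b, f x * k x := by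
  unfold dM
  rw [integral_withDensity_eq_integral_toReal_smul h.meas.ennreal_ofReal
    (Filter.Eventually.of_forall fun x => ENNReal.ofReal_lt_top),
    intervalIntegral.integral_of_le hb.le]
  congr 1
  ext x
  rw [ENNReal.toReal_ofReal (h.nonneg x), smul_eq_mul]

lemma dM_prob {f : ℝ → ℝ} {b : ℝ} (hb : 0 < b) (h : IsDensityOn f b) :
    IsProbabilityMeasure (dM f b) := by
  constructor
  unfold dM
  rw [withDensity_apply _ MeasurableSet.univ, Measure.restrict_univ,
    ← ofReal_integral_eq_lintegral_ofReal
      ((intervalIntegrable_iff_integrableOn_Ioc_of_le hb.le).1 (h.integ 0 b))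
      (Filter.Eventually.of_forall h.nonneg), ← intervalIntegral.integral_of_le hb.le, h.int_one]
  simp

lemma dM_ac (f : ℝ → ℝ) (b : ℝ) : dM f b ≪ volume.restrict (Ioc 0 b) :=
  withDensity_absolutelyContinuous _ _

lemma dM_ac' {f : ℝ → ℝ} {b : ℝ} (h : IsDensityOn f b) :
    volume.restrict (Ioc 0 b) ≪ dM f b := by
  refine withDensity_absolutelyContinuous' h.meas.ennreal_ofReal.aemeasurable ?_
  filter_upwards [ae_restrict_mem measurableSet_Ioc] with x hx
  simpa using h.pos x (Ioc_subset_Icc_self hx)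

lemma dM_mem (f : ℝ → ℝ) (b : ℝ) : ∀ᵐ x ∂(dM f b), x ∈ Ioc 0 b :=
  (dM_ac f b).ae_le (ae_restrict_mem measurableSet_Ioc)

lemma dM_ne (f : ℝ → ℝ) (b s : ℝ) : ∀ᵐ x ∂(dM f b), x ≠ s := by
  refine (dM_ac f b).ae_le (ae_restrict_of_ae ?_)
  simp [ae_iff]

lemma dM_trunc {f : ℝ → ℝ} {b : ℝ} (hb : 0 < b) (h : IsDensityOn f b) {v : ℝ} (hv : 0 ≤ v)
    (hvb : v ≤ b) (k : ℝ → ℝ) :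
    ∫ x, (if x ≤ v then k x else 0) ∂(dM f b) = ∫ x in (0:ℝ)..v, f x * k x := by
  rw [dM_integral hb h, intervalIntegral.integral_of_le hb.le, intervalIntegral.integral_of_le hv]
  have : Ioc 0 v = Ioc 0 b ∩ Iic v := by
    ext x; simp only [mem_Ioc, mem_inter_iff, mem_Iic]
    constructor
    · rintro ⟨h1, h2⟩; exact ⟨⟨h1, h2.trans hvb⟩, h2⟩
    · rintro ⟨⟨h1, _⟩, h2⟩; exact ⟨h1, h2⟩
  rw [this, ← setIntegral_indicator measurableSet_Iic]
  congr 1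
  ext x
  by_cases hx : x ≤ v <;> simp [hx]

lemma dM_tail {f : ℝ → ℝ} {b : ℝ} (hb : 0 < b) (h : IsDensityOn f b) {x : ℝ} (hx : 0 ≤ x) :
    (dM f b).real (Ioi x) = 1 - CDF f x := by
  have := dM_prob hb h
  have key : (dM f b).real (Iic x) = CDF f x := by
    rw [← integral_indicator_one measurableSet_Iic]
    rcases le_total x b with hxb | hxb
    · have := dM_trunc hb h hx hxb (fun _ => 1)
      simp only [mul_one] at this
      rw [CDF, ← this]
      rfl
    · have e1 : CDF f x = 1 := by
        rw [CDF, ← intervalIntegral.integral_add_adjacent_intervals (h.integ 0 b) (h.integ b x),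
          h.int_one]
        have : ∫ s in b..x, f s = 0 := by
          refine intervalIntegral.integral_zero_ae (Filter.Eventually.of_forall fun s hs => ?_)
          rw [uIoc_of_le hxb] at hs
          exact h.supp s fun hh => absurd hh.2 (not_le.2 hs.1)
        rw [this, add_zero]
      rw [e1]
      have e2 : (Iic x).indicator (1 : ℝ → ℝ) =ᵐ[dM f b] fun _ => 1 := by
        filter_upwards [dM_mem f b] with s hs
        simp [hs.2.trans hxb]
      rw [integral_congr_ae e2]
      simp
  rw [← key, ← compl_Iic, probReal_compl_eq_one_sub measurableSet_Iic]

lemma iter_eq_s3 {f g : ℝ → ℝ} {abar ubar : ℝ} (ha : 0 < abar) (hu : 0 < ubar)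
    (hf : IsDensityOn f abar) (hg : IsDensityOn g ubar) {h k : ℝ → ℝ → ℝ}
    (hh : Integrable (fun p : ℝ × ℝ => h p.1 p.2) ((dM f abar).prod (dM g ubar)))
    (hk : ∀ α u, k α u = f α * g u * h α u) :
    ∫ u in (0:ℝ)..ubar, ∫ α in (0:ℝ)..abar, k α u
      = ∫ p, h p.1 p.2 ∂((dM f abar).prod (dM g ubar)) := by
  have := dM_prob ha hf
  have := dM_prob hu hg
  rw [integral_prod_symm _ hh, dM_integral hu hg]
  congr 1
  ext u
  rw [dM_integral ha hf, ← intervalIntegral.integral_const_mul]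
  congr 1
  ext α
  rw [hk]
  ring

lemma FB_nonpos {f g : ℝ → ℝ} {abar ubar v K : ℝ} (ha : 0 < abar) (hu : 0 < ubar)
    (hv : 0 < v) (hvu : v < ubar)
    (hf : IsDensityOn f abar) (hg : IsDensityOn g ubar)
    (hrU : Integrable (rFun g) (dM g ubar))
    {αstar : ℝ → ℝ} (hs : Monotone αstar) (hs0 : ∀ u, 0 < u → 0 ≤ αstar u)
    (hK : Klow f g αstar v < K)
    (hS : MeasurableSet {p : ℝ × ℝ | 0 < p.1 ∧ p.2 ≤ v ∧ αstar p.2 < p.1}) :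
    ∫ p, {p : ℝ × ℝ | 0 < p.1 ∧ p.2 ≤ v ∧ αstar p.2 < p.1}.indicator
      (fun p => rFun g p.2 - K) p ∂((dM f abar).prod (dM g ubar)) ≤ 0 := by
  have pA := dM_prob ha hf
  have pU := dM_prob hu hg
  set A := dM f abar with hA
  set U := dM g ubar with hUdef
  set φ : ℝ → ℝ := fun u => A.real (Ioi (αstar u)) with hφ
  have φanti : Antitone φ := fun x y hxy => measureReal_mono (Ioi_subset_Ioi (hs hxy))
  have φm : Measurable φ := φanti.measurable
  have φ0 : ∀ u, 0 ≤ φ u := fun u => measureReal_nonneg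
  have φ1 : ∀ u, φ u ≤ 1 := fun u => measureReal_le_one
  have hrK : Integrable (fun p : ℝ × ℝ => rFun g p.2 - K) (A.prod U) :=
    (hrU.comp_snd A).sub (integrable_const K)
  set k : ℝ → ℝ := fun u => if u ≤ v then φ u else 0 with hk
  have km : Measurable k := Measurable.ite measurableSet_Iic φm measurable_const
  have k0 : ∀ u, 0 ≤ k u := by intro u; simp only [hk]; split_ifs <;> simp [φ0]
  have kb : ∀ u, ‖k u‖ ≤ 1 := by
    intro u
    rw [Real.norm_eq_abs, abs_of_nonneg (k0 u)]
    simp only [hk]; split_ifs <;> simp [φ1]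
  have ik : Integrable k U :=
    Integrable.of_bound km.aestronglyMeasurable 1 (Filter.Eventually.of_forall kb)
  have irk : Integrable (fun u => rFun g u * k u) U :=
    hrU.mul_bdd (c := 1) km.aestronglyMeasurable (Filter.Eventually.of_forall kb)
  have hden : ∫ u in (0:ℝ)..v, (1 - CDF f (αstar u)) * g u = ∫ u, k u ∂U := by
    simp only [hk]
    rw [hUdef, dM_trunc hu hg hv.le hvu.le, intervalIntegral.integral_of_le hv.le,
      intervalIntegral.integral_of_le hv.le]
    refine setIntegral_congr_fun measurableSet_Ioc fun u huu => ?_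
    simp only [hφ, hA]
    rw [dM_tail ha hf (hs0 u huu.1)]
    ring
  have hnum : ∫ u in (0:ℝ)..v, (1 - CDF f (αstar u)) * (1 - CDF g u - u * g u)
      = ∫ u, rFun g u * k u ∂U := by
    have : (fun u => rFun g u * k u) = fun u => if u ≤ v then rFun g u * φ u else 0 := by
      ext u; simp only [hk]; split_ifs <;> simp
    rw [this, hUdef, dM_trunc hu hg hv.le hvu.le, intervalIntegral.integral_of_le hv.le,
      intervalIntegral.integral_of_le hv.le]
    refine setIntegral_congr_fun measurableSet_Ioc fun u huu => ?_
    simp only [hφ, hA]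
    rw [dM_tail ha hf (hs0 u huu.1), rFun]
    have : 0 < g u := hg.pos u ⟨huu.1.le, huu.2.trans hvu.le⟩
    field_simp
  have hint : ∫ p, {p : ℝ × ℝ | 0 < p.1 ∧ p.2 ≤ v ∧ αstar p.2 < p.1}.indicator
      (fun p => rFun g p.2 - K) p ∂(A.prod U) = (∫ u, rFun g u * k u ∂U) - K * ∫ u, k u ∂U := by
    rw [integral_prod_symm _ (hrK.indicator hS), ← integral_const_mul,
      ← integral_sub irk (ik.const_mul K)]
    congr 1
    ext u
    have e : ∫ α, {p : ℝ × ℝ | 0 < p.1 ∧ p.2 ≤ v ∧ αstar p.2 < p.1}.indicator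
        (fun p => rFun g p.2 - K) (α, u) ∂A
        = ∫ α, (if u ≤ v then (rFun g u - K) * (Ioi (αstar u)).indicator 1 α else 0) ∂A := by
      refine integral_congr_ae ?_
      filter_upwards [dM_mem f abar] with α hα
      by_cases h1 : u ≤ v <;> by_cases h2 : αstar u < α <;>
        simp [h1, h2, hα.1, Set.indicator]
    rw [e]
    by_cases h1 : u ≤ v
    · simp only [h1, if_true, hk]
      rw [integral_const_mul, integral_indicator_one measurableSet_Ioi]
      ring
    · simp [h1, hk]
  rw [hint]
  rw [Klow, hnum, hden] at hK
  rcases (integral_nonneg k0 : 0 ≤ ∫ u, k u ∂U).eq_or_lt with h0 | h0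
  · have hz := (integral_eq_zero_iff_of_nonneg k0 ik).1 h0.symm
    have : ∫ u, rFun g u * k u ∂U = 0 := by
      refine integral_eq_zero_of_ae ?_
      filter_upwards [hz] with u hu
      simp [hu]
    rw [this, ← h0]; simp
  · rw [div_lt_iff₀ h0] at hK
    linarith

/-- for `K > K_low` and `r` strictly decreasing, every optimal pair
satisfies `a°(α,u) = 0` and `c°(α,u) = 0` for almost every `(α,u)` with `α > 0`, `u > v`. -/
theorem sharing_above_v
    (abar ubar v K : ℝ) (habar : 0 < abar) (hubar : 0 < ubar) (hv : 0 < v) (hK0 : 0 ≤ K)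
    (f g : ℝ → ℝ) (t : ℝ → ℝ → ℝ) (αstar : ℝ → ℝ)
    (hf : IsDensityOn f abar) (hg : IsDensityOn g ubar)
    (hr : StrictAntiOn (rFun g) (Icc 0 ubar))
    (ht : InterferenceSpec t αstar)
    (hK : Klow f g αstar v < K)
    (a c : ℝ → ℝ → ℝ)
    (hopt : Optimal abar ubar v K f g t a c) :
    ∀ᵐ p : ℝ × ℝ ∂volume, p ∈ Icc (0:ℝ) abar ×ˢ Icc (0:ℝ) ubar →
      0 < p.1 → v < p.2 → a p.1 p.2 = 0 ∧ c p.1 p.2 = 0 := by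
  by_cases hvu : ubar ≤ v
  · refine Filter.Eventually.of_forall fun p hp _ h2 => ?_
    exact absurd (hp.2.2.trans hvu) (not_le.2 h2)
  push Not at hvu
  have pA := dM_prob habar hf
  have pU := dM_prob hubar hg
  set A := dM f abar with hA
  set U := dM g ubar with hUdef
  obtain ⟨hfeas, hmax⟩ := hopt
  have hNB : NB a c := ⟨hfeas.meas_a, hfeas.meas_c, hfeas.mem_a, hfeas.mem_c, hfeas.ic,
    hfeas.inspect, hfeas.u_mono, hfeas.α_mono0⟩
  have memA : ∀ᵐ p ∂(A.prod U), p.1 ∈ Ioc 0 abar :=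
    Measure.quasiMeasurePreserving_fst.ae (dM_mem f abar)
  have memU : ∀ᵐ p ∂(A.prod U), p.2 ∈ Ioc 0 ubar :=
    Measure.quasiMeasurePreserving_snd.ae (dM_mem g ubar)
  have hU : ∀ᵐ p ∂(A.prod U), 0 < p.1 ∧ p.2 ∈ Ioc 0 ubar := by
    filter_upwards [memA, memU] with p h1 h2
    exact ⟨h1.1, h2⟩
  have hQs : ∀ s : ℝ, ∀ᵐ p ∂(A.prod U), p.2 ≠ s := fun s =>
    Measure.quasiMeasurePreserving_snd.ae (dM_ne g ubar s)
  have hrU : Integrable (rFun g) U := by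
    have hm : AEMeasurable (rFun g) (volume.restrict (Ioc 0 ubar)) :=
      aemeasurable_restrict_of_antitoneOn measurableSet_Ioc
        (hr.antitoneOn.mono Ioc_subset_Icc_self)
    refine Integrable.of_bound (hm.mono_ac (dM_ac g ubar)).aestronglyMeasurable
      (|rFun g 0| + |rFun g ubar|) ?_
    filter_upwards [dM_mem g ubar] with u hu
    have h1 := hr.antitoneOn (left_mem_Icc.2 hubar.le) (Ioc_subset_Icc_self hu) hu.1.le
    have h2 := hr.antitoneOn (Ioc_subset_Icc_self hu) (right_mem_Icc.2 hubar.le) hu.2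
    rw [Real.norm_eq_abs, abs_le]
    constructor
    · linarith [neg_abs_le (rFun g ubar), abs_nonneg (rFun g 0)]
    · linarith [le_abs_self (rFun g 0), abs_nonneg (rFun g ubar)]
  have hrQ : Integrable (fun p : ℝ × ℝ => rFun g p.2) (A.prod U) := hrU.comp_snd A
  set w : ℝ → ℝ → ℝ := fun α u => min v (t α u) - u with hw
  have tm : Measurable (Function.uncurry t) := by
    rcases ht with ⟨h1, _⟩ | ⟨h1, _⟩
    · have : Function.uncurry t = fun p => p.1 := by ext ⟨α, u⟩; exact h1 α u
      rw [this]; exact measurable_fst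
    · have : Function.uncurry t = fun p => p.1 * p.2 := by ext ⟨α, u⟩; exact h1 α u
      rw [this]; exact measurable_fst.mul measurable_snd
  have t0 : ∀ α u, 0 < α → 0 < u → 0 ≤ t α u := by
    intro α u h1 h2
    rcases ht with ⟨h, _⟩ | ⟨h, _⟩ <;> rw [h] <;> positivity
  have wb : ∀ α u, 0 < α → u ∈ Ioc 0 ubar → ‖w α u‖ ≤ v + ubar := by
    intro α u h1 h2
    have e1 : 0 ≤ min v (t α u) := le_min hv.le (t0 α u h1 h2.1)
    have e2 : min v (t α u) ≤ v := min_le_left _ _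
    rw [Real.norm_eq_abs, abs_le]
    constructor <;> simp only [hw] <;> linarith [h2.1, h2.2]
  have wm : Measurable (fun p : ℝ × ℝ => w p.1 p.2) :=
    (measurable_const.min tm).sub measurable_snd
  have hwint : Integrable (fun p => w p.1 p.2) (A.prod U) := by
    refine Integrable.of_bound wm.aestronglyMeasurable (v + ubar) ?_
    filter_upwards [hU] with p hp
    exact wb p.1 p.2 hp.1 hp.2
  have hwv : Integrable (fun α => w α v) A := by
    refine Integrable.of_bound
      (wm.comp (measurable_id.prodMk measurable_const)).aestronglyMeasurable (v + ubar) ?_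
    filter_upwards [dM_mem f abar] with α hα
    exact wb α v hα.1 ⟨hv, hvu.le⟩
  have hw1 : ∀ α u, v ≤ u → w α u ≤ 0 := by
    intro α u h
    have := min_le_left v (t α u)
    simp only [hw]; linarith
  have hw3 : ∀ α u, v < u → w α u ≤ w α v := by
    intro α u h
    simp only [hw]
    rcases ht with ⟨h1, _⟩ | ⟨h1, _⟩ <;> rw [h1, h1]
    · linarith
    · rcases le_total 1 α with h2 | h2
      · have e1 : min v (α * v) = v := min_eq_left (by nlinarith)
        rw [e1]
        linarith [min_le_left v (α * u)]
      · have e1 : min v (α * v) = α * v := min_eq_right (by nlinarith)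
        rw [e1]
        have := min_le_right v (α * u)
        nlinarith
  have hw4 : ∀ α u, 0 < α → 0 < u → u ≤ v → u / v * w α v ≤ w α u := by
    intro α u hα h0 h
    have d1 : u / v ≤ 1 := (div_le_one hv).2 h
    have d2 : 0 < u / v := by positivity
    have d3 : u / v * v = u := by field_simp
    have key : u / v * min v (t α v) ≤ min v (t α u) := by
      refine le_min ?_ ?_
      · have := mul_le_mul_of_nonneg_left (min_le_left v (t α v)) d2.le
        linarith
      · have e := mul_le_mul_of_nonneg_left (min_le_right v (t α v)) d2.le
        have e' := mul_le_mul_of_nonneg_left (min_le_left v (t α v)) d2.le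
        rcases ht with ⟨h1, _⟩ | ⟨h1, _⟩
        · rw [h1] at e ⊢
          rw [h1]
          nlinarith
        · rw [h1] at e ⊢
          rw [h1]
          have : u / v * (α * v) = α * u := by rw [← d3]; field_simp
          linarith
    simp only [hw]
    rw [mul_sub, d3]
    linarith
  have hsm : Monotone αstar := by
    intro x y hxy
    rcases ht with ⟨_, h1⟩ | ⟨_, h1⟩ <;> rw [h1, h1]
    exact hxy
  have hs0 : ∀ u, 0 < u → 0 ≤ αstar u := by
    intro u hu
    rcases ht with ⟨_, h1⟩ | ⟨_, h1⟩ <;> rw [h1]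
    · exact hu.le
    · exact zero_le_one
  set S : Set (ℝ × ℝ) := {p : ℝ × ℝ | 0 < p.1 ∧ p.2 ≤ v ∧ αstar p.2 < p.1} with hSdef
  have hS : MeasurableSet S :=
    (measurableSet_lt measurable_const measurable_fst).inter
      ((measurableSet_le measurable_snd measurable_const).inter
        (measurableSet_lt (hsm.measurable.comp measurable_snd) measurable_fst))
  have hFB := FB_nonpos habar hubar hv hvu hf hg hrU hsm hs0 hK hS
  have hSw : ∀ α u, 0 < α → 0 < u → (α, u) ∈ S → 0 ≤ w α u := by
    rintro α u h1 h2 ⟨h3, h4, h5⟩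
    simp only [hw, sub_nonneg]
    refine le_min h4 ?_
    simp only at h5
    rcases ht with ⟨h6, h7⟩ | ⟨h6, h7⟩ <;> rw [h6] <;> rw [h7] at h5
    · exact h5.le
    · nlinarith
  have hSn : ∀ α u, 0 < α → 0 < u → (α, u) ∉ S → w α u ≤ 0 := by
    intro α u h1 h2 h3
    simp only [hw, sub_nonpos]
    by_cases h4 : u ≤ v
    · have h5 : α ≤ αstar u := by
        by_contra h5
        exact h3 ⟨h1, h4, not_le.1 h5⟩
      refine (min_le_right _ _).trans ?_
      rcases ht with ⟨h6, h7⟩ | ⟨h6, h7⟩ <;> rw [h6] <;> rw [h7] at h5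
      · exact h5
      · nlinarith
    · exact (min_le_left _ _).trans (not_le.1 h4).le
  have eJ : ∀ a' c', NB a' c' → J abar ubar v f g t a'
      = ∫ p, w p.1 p.2 * a' p.1 p.2 ∂(A.prod U) := by
    intro a' c' h
    exact iter_eq_s3 habar hubar hf hg (h := fun α u => w α u * a' α u)
      (int_mul_bdd hwint h.meas_a h.mem_a) (fun α u => by simp only [hw]; ring)
  have eB : ∀ a' c', NB a' c' →
      (∫ u in (0:ℝ)..ubar, ∫ α in (0:ℝ)..abar, f α * g u * rFun g u * a' α u)
        - K * (∫ u in (0:ℝ)..ubar, ∫ α in (0:ℝ)..abar, f α * g u * c' α u)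
      = ∫ p, bI (rFun g) K a' c' p ∂(A.prod U) := by
    intro a' c' h
    have i1 := int_mul_bdd hrQ h.meas_a h.mem_a
    have i2 := int_mul_bdd (φ := fun _ => (1:ℝ)) (integrable_const (μ := A.prod U) (1:ℝ))
      h.meas_c h.mem_c
    simp only [one_mul] at i2
    rw [iter_eq_s3 habar hubar hf hg (h := fun α u => rFun g u * a' α u) i1 (fun α u => by ring),
      iter_eq_s3 habar hubar hf hg (h := fun α u => c' α u) i2 (fun α u => rfl),
      ← integral_const_mul, ← integral_sub i1 (i2.const_mul K)]
    rfl
  have hcore := core (A := A) (U := U) (w := w) (r := rFun g) (S := S) hv hvu hK0 hU hQs hwint hwv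
    hrU hr hw1 hw3 hw4 hS
    (fun u hu => lt_irrefl _ hu.1)
    (fun α u u' h1 h2 => ⟨h2.1, h1.trans h2.2.1, (hsm h1).trans_lt h2.2.2⟩)
    (fun α u h => h.2.1) hSw hSn hFB hNB
    (by rw [← eB a c hNB, hfeas.budget, sub_self])
    (by
      intro a' c' h hb
      rw [← eJ a' c' h, ← eJ a c hNB]
      refine hmax a' c' ⟨h.meas_a, h.meas_c, h.mem_a, h.mem_c, ?_, h.ic, h.inspect, h.u_mono,
        h.α_mono0⟩
      rw [← eB a' c' h] at hb
      linarith)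
  -- conclude
  have n0 := hNB.glue MeasurableSet.empty (by simp) (by simp) v
  have iJ0 := int_mul_bdd hwint hNB.meas_a hNB.mem_a
  have iJ1 := int_mul_bdd hwint n0.meas_a n0.mem_a
  have nonneg : 0 ≤ᵐ[A.prod U] fun p => w p.1 p.2 * glue ∅ v a p.1 p.2 - w p.1 p.2 * a p.1 p.2 := by
    refine Filter.Eventually.of_forall fun p => ?_
    obtain ⟨α, u⟩ := p
    simp only [Spectrum.glue, mem_empty_iff_false, if_false, Pi.zero_apply]
    split_ifs with hu
    · simp
    · have := hw1 α u (not_le.1 hu).le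
      nlinarith [(hNB.mem_a α u).1]
  have eq0 : ∫ p, (w p.1 p.2 * glue ∅ v a p.1 p.2 - w p.1 p.2 * a p.1 p.2) ∂(A.prod U) = 0 := by
    refine le_antisymm ?_ (integral_nonneg_of_ae nonneg)
    rw [integral_sub iJ1 iJ0]
    linarith
  rw [integral_eq_zero_iff_of_nonneg_ae nonneg (iJ1.sub iJ0)] at eq0
  have hac : (volume.restrict (Ioc 0 abar)).prod (volume.restrict (Ioc 0 ubar)) ≪ A.prod U :=
    (dM_ac' hf).prod (dM_ac' hg)
  have hae := hac.ae_le eq0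
  rw [Measure.prod_restrict, ← Measure.volume_eq_prod] at hae
  have hae' := (ae_restrict_iff' (measurableSet_Ioc.prod measurableSet_Ioc)).1 hae
  filter_upwards [hae'] with p hp hmem h1 h2
  obtain ⟨α, u⟩ := p
  have e := hp ⟨⟨h1, hmem.1.2⟩, ⟨hv.trans h2, hmem.2.2⟩⟩
  simp only at h1 h2
  simp only [Spectrum.glue, mem_empty_iff_false, if_false, not_le.2 h2, Pi.zero_apply] at e
  have e1 : w α u < 0 := by
    have := min_le_left v (t α u)
    simp only [hw]; linarith
  have e2 : a α u = 0 := by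
    have : w α u * a α u = 0 := by linarith
    rcases mul_eq_zero.1 this with h | h
    · exact absurd h e1.ne
    · exact h
  refine ⟨e2, le_antisymm ?_ (hNB.mem_c α u).1⟩
  have := hNB.inspect α u
  simp only
  linarith

end Spectrum
end
end
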